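/- Fix integers d ≥ 1, r ≥ 0 and a strict partition λ with d parts such that λ_i ≤ r + 2d − 2i + 1 for all i. Then |BS(Z(d,r))|_λ| = |Red(w^λ)|, i.e. the number of balanced shifted tableaux of shape Z(d,r) in which, for every i ∈ {1,…,d}, each of the entries N + σ_{i−1} + 1, …, N + σ_i occurs in row i, equals the number of reduced words of w^λ. -/

import Mathlib

open scoped BigOperators

namespace BST

/-- `lam` (1-indexed, with `d` parts) is a strict partition: strictly decreasing
positive parts `lam 1 > lam 2 > ⋯ > lam d > 0`. -/
def IsStrictPartition (d : ℕ) (lam : ℕ → ℕ) : Prop :=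
  (∀ i : ℕ, 1 ≤ i → i < d → lam (i + 1) < lam i) ∧ 1 ≤ lam d

/-- The size `|λ| = λ_1 + ⋯ + λ_d`. -/
def sizeP (d : ℕ) (lam : ℕ → ℕ) : ℕ := ∑ i ∈ Finset.Icc 1 d, lam i

/-- The shifted diagram `D(λ) ⊆ ℤ × ℤ`: row `i` (1 ≤ i ≤ d) occupies columns
`i - d, …, λ_i + i - d - 1`. -/
def Diagram (d : ℕ) (lam : ℕ → ℕ) : Set (ℤ × ℤ) :=
  {p : ℤ × ℤ | 1 ≤ p.1 ∧ p.1 ≤ (d : ℤ) ∧ p.1 - (d : ℤ) ≤ p.2 ∧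
    p.2 + (d : ℤ) + 1 ≤ (lam p.1.toNat : ℤ) + p.1}

/-- The hook `H(i,c)`. -/
def Hook (d : ℕ) (lam : ℕ → ℕ) (i c : ℤ) : Set (ℤ × ℤ) :=
  {(i, c)} ∪ {p ∈ Diagram d lam | (p.1 = i ∧ c < p.2) ∨ (p.2 = c ∧ i < p.1)} ∪
    {p ∈ Diagram d lam | c < 0 ∧ p.1 = (d : ℤ) + 1 + c}

/-- The extended hook `H̃(i,c)`. -/
def ExtHook (d : ℕ) (lam : ℕ → ℕ) (i c : ℤ) : Set (ℤ × ℤ) :=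
  Hook d lam i c ∪ {p : ℤ × ℤ | c < 0 ∧ p = ((d : ℤ) + 1 + c, c)}

/-- The extended diagram `D(λ) ∪ {(i, i - d - 1) : 1 ≤ i ≤ d}`. -/
def ExtDiagram (d : ℕ) (lam : ℕ → ℕ) : Set (ℤ × ℤ) :=
  Diagram d lam ∪ {p : ℤ × ℤ | 1 ≤ p.1 ∧ p.1 ≤ (d : ℤ) ∧ p.2 = p.1 - ((d : ℤ) + 1)}

/-- The extended filling `B̃`, with `B̃(i, i - d - 1) = B(i, 0)`. -/
def ExtFilling (d : ℕ) (B : ℤ × ℤ → ℕ) : ℤ × ℤ → ℕ :=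
  fun p => if p.2 = p.1 - ((d : ℤ) + 1) then B (p.1, 0) else B p

/-- The rank function `rk(i,c)`. -/
def rk (d : ℕ) (lam : ℕ → ℕ) (i c : ℤ) : ℤ :=
  if 0 ≤ c then (lam i.toNat : ℤ) - d + i - c
  else (lam i.toNat : ℤ) - d + i + (lam ((d : ℤ) + 1 + c).toNat : ℤ) + c + 1

/-- A bijective filling of `D(λ)` with `1, …, |λ|` (normalized to be `0` off the diagram). -/
def IsFilling (d : ℕ) (lam : ℕ → ℕ) (B : ℤ × ℤ → ℕ) : Prop :=
  Set.BijOn B (Diagram d lam) (Set.Icc 1 (sizeP d lam)) ∧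
    ∀ p : ℤ × ℤ, p ∉ Diagram d lam → B p = 0

/-- A balanced shifted tableau: a bijective filling such that at each box `(i,c)`,
`B(i,c)` is the `rk(i,c)`-th largest entry of the multiset of values of `B̃` on the
extended hook, i.e. exactly `rk(i,c) - 1` boxes of the extended hook carry a value
strictly larger than `B(i,c)`. -/
def IsBalanced (d : ℕ) (lam : ℕ → ℕ) (B : ℤ × ℤ → ℕ) : Prop :=
  IsFilling d lam B ∧ ∀ p ∈ Diagram d lam,
    ({q ∈ ExtHook d lam p.1 p.2 | B p < ExtFilling d B q}.ncard : ℤ) =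
      rk d lam p.1 p.2 - 1

/-- A standard Young tableau of shifted shape `λ`. -/
def IsSYT (d : ℕ) (lam : ℕ → ℕ) (B : ℤ × ℤ → ℕ) : Prop :=
  IsFilling d lam B ∧ ∀ p ∈ Diagram d lam, ∀ q ∈ Diagram d lam,
    ((p.1 = q.1 ∧ p.2 < q.2) → B p < B q) ∧ ((p.2 = q.2 ∧ p.1 < q.1) → B p < B q)

/-- The simple reflections of `W(B_n)`, acting on `ℤ`: `s 0` swaps `1 ↔ -1`,
and `s a` (for `a ≥ 1`) swaps `a ↔ a+1` and `-a ↔ -(a+1)`. -/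
def sB (a : ℕ) : Equiv.Perm ℤ :=
  if a = 0 then Equiv.swap 1 (-1)
  else Equiv.swap (a : ℤ) ((a : ℤ) + 1) * Equiv.swap (-(a : ℤ)) (-(a : ℤ) - 1)

/-- The product `s_{a_1} s_{a_2} ⋯ s_{a_m}` of a word. -/
def wordProd (L : List ℕ) : Equiv.Perm ℤ := (L.map sB).prod

/-- A signed permutation in `W(B_n)`: odd, and the identity beyond `n`. -/
def IsSignedPerm (n : ℕ) (w : Equiv.Perm ℤ) : Prop :=
  (∀ i : ℤ, w (-i) = -(w i)) ∧ ∀ i : ℤ, (n : ℤ) < |i| → w i = i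

/-- The Coxeter length of `w` in `W(B_n)`. -/
noncomputable def lengthB (n : ℕ) (w : Equiv.Perm ℤ) : ℕ :=
  sInf {m : ℕ | ∃ L : List ℕ, (∀ a ∈ L, a < n) ∧ wordProd L = w ∧ L.length = m}

/-- `L` is a reduced word of `w` in `W(B_n)`. -/
def IsReducedWord (n : ℕ) (w : Equiv.Perm ℤ) (L : List ℕ) : Prop :=
  (∀ a ∈ L, a < n) ∧ wordProd L = w ∧ L.length = lengthB n w

/-- The vector `e_k` (for `k ≥ 1` the `k`-th standard basis vector, with the
conventions `e 0 = 0` and `e (-k) = - e k`), represented as an odd function `ℤ → ℤ`. -/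
def eVec (k : ℤ) : ℤ → ℤ :=
  fun t => if t = 0 then 0 else if t = k then 1 else if t = -k then -1 else 0

/-- The positive roots of type `B_n`. -/
def PosRoots (n : ℕ) : Set (ℤ → ℤ) :=
  {v | (∃ i j : ℤ, 1 ≤ i ∧ i < j ∧ j ≤ (n : ℤ) ∧
        (v = eVec j - eVec i ∨ v = eVec j + eVec i)) ∨
       (∃ i : ℤ, 1 ≤ i ∧ i ≤ (n : ℤ) ∧ v = eVec i)}

/-- The action of a signed permutation on vectors: `w · e_i = e_{w(i)}`. -/
def actB (w : Equiv.Perm ℤ) (v : ℤ → ℤ) : ℤ → ℤ := fun t => v (w⁻¹ t)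

/-- The inversion set `Inv(w) = {α ∈ Φ⁺ : w⁻¹ · α ∈ -Φ⁺}`. -/
def InvSet (n : ℕ) (w : Equiv.Perm ℤ) : Set (ℤ → ℤ) :=
  {α | α ∈ PosRoots n ∧ -(actB w⁻¹ α) ∈ PosRoots n}

/-- The simple roots: `α_0 = e_1` and `α_a = e_{a+1} - e_a` for `a ≥ 1`. -/
def alphaRoot (a : ℕ) : ℤ → ℤ :=
  if a = 0 then eVec 1 else eVec ((a : ℤ) + 1) - eVec (a : ℤ)

/-- The reflection order of a word: `reflOrder L t = γ_{t+1} = s_{a_1} ⋯ s_{a_t} · α_{a_{t+1}}`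
(0-indexed). -/
def reflOrder (L : List ℕ) (t : ℕ) : ℤ → ℤ :=
  actB (wordProd (L.take t)) (alphaRoot (L.getD t 0))

/-- The trapezoid `Z(d,r) = (r+2d-1, r+2d-3, …, r+1)`. -/
def Zlam (d r : ℕ) : ℕ → ℕ := fun i => r + 2 * d + 1 - 2 * i

/-- The labeling `f : D(Z(d,r)) → Φ⁺`. -/
def fLabel (d r : ℕ) (p : ℤ × ℤ) : ℤ → ℤ :=
  if p.2 ≤ 0 then eVec ((d : ℤ) + 1 - p.1) - eVec p.2
  else if p.2 ≤ (r : ℤ) then eVec ((d : ℤ) + 1 - p.1) + eVec (p.2 + (d : ℤ))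
  else eVec ((d : ℤ) + 1 - p.1) - eVec (p.2 - (r : ℤ))

/-- The extended labeling `f̃`, with `f̃(i, i - d - 1) = 2 e_{d+1-i}`. -/
def fExtLabel (d r : ℕ) (p : ℤ × ℤ) : ℤ → ℤ :=
  if p.2 = p.1 - ((d : ℤ) + 1) then (2 : ℤ) • eVec ((d : ℤ) + 1 - p.1)
  else fLabel d r p

/-- `w` is the signed permutation `w^{(d,r)} ∈ W(B_{d+r})`, i.e.
`w(i) = d + i` for `1 ≤ i ≤ r` and `w(i) = -(i - r)` for `r < i ≤ d + r`. -/
def IsWdr (d r : ℕ) (w : Equiv.Perm ℤ) : Prop :=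
  IsSignedPerm (d + r) w ∧
    (∀ i : ℤ, 1 ≤ i → i ≤ (r : ℤ) → w i = (d : ℤ) + i) ∧
    (∀ i : ℤ, (r : ℤ) < i → i ≤ (d : ℤ) + (r : ℤ) → w i = -(i - r))


/-- `x` lies strictly between `y` and `z` (i.e. `min(y,z) < x < max(y,z)`). -/
def Between (x y z : ℕ) : Prop := (y < x ∧ x < z) ∨ (z < x ∧ x < y)

/-- A nonempty list is unimodal: strictly decreasing down to its minimum
(at 0-indexed position `k`), then strictly increasing. -/
def Unimodal (L : List ℕ) : Prop :=
  ∃ k : ℕ, k < L.length ∧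
    (∀ a b : ℕ, a < b → b ≤ k → L.getD b 0 < L.getD a 0) ∧
    (∀ a b : ℕ, k ≤ a → a < b → b < L.length → L.getD a 0 < L.getD b 0)

/-- Row `i` of the distinguished tableau of shape `Z(d,r)`:
`(r+d-i, …, r+1, 0, 1, …, r+d-i)`. -/
def rowWord (d r i : ℕ) : List ℕ :=
  (List.range (r + 2 * (d - i) + 1)).map fun t =>
    if t < d - i then r + (d - i) - t else t - (d - i)

/-- The reading word `π(T) = T_d T_{d-1} ⋯ T_1` of the distinguished tableau of
shape `Z(d,r)`. -/
def piWord (d r : ℕ) : List ℕ :=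
  (List.range d).flatMap fun k => rowWord d r (d - k)

/-- `μ_i = Z(d,r)_i - λ_i`. -/
def muF (d r : ℕ) (lam : ℕ → ℕ) (i : ℕ) : ℕ := r + 2 * d + 1 - 2 * i - lam i

/-- `σ_i = μ_1 + ⋯ + μ_i`. -/
def sigmaF (d r : ℕ) (lam : ℕ → ℕ) (i : ℕ) : ℕ := ∑ t ∈ Finset.Icc 1 i, muF d r lam t

/-- `ν_i = min{μ_i, …, μ_d}`. -/
noncomputable def nuF (d r : ℕ) (lam : ℕ → ℕ) (i : ℕ) : ℕ :=
  sInf {m : ℕ | ∃ j : ℕ, i ≤ j ∧ j ≤ d ∧ m = muF d r lam j}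

/-- The word `a^λ`: the concatenation over `i = 1, …, d` of the increasing runs
`(d+r-i-μ_i+1, …, d+r-i)`. -/
def aLamWord (d r : ℕ) (lam : ℕ → ℕ) : List ℕ :=
  (List.range d).flatMap fun k =>
    (List.range (muF d r lam (k + 1))).map fun t =>
      d + r - (k + 1) - muF d r lam (k + 1) + 1 + t

/-- Row `i` of the tableau `P(w^λ)`: entries `P(i,c) = c` for `c ≥ 0` and
`P(i,c) = r - c - ν_{d+1+c}` for `c < 0`. -/
noncomputable def rowWordP (d r : ℕ) (lam : ℕ → ℕ) (i : ℕ) : List ℕ :=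
  (List.range (lam i)).map fun t =>
    if t < d - i then r + (d - i) - t - nuF d r lam (i + 1 + t) else t - (d - i)

/-- The reading word `π(P(w^λ))`. -/
noncomputable def piWordP (d r : ℕ) (lam : ℕ → ℕ) : List ℕ :=
  (List.range d).flatMap fun k => rowWordP d r lam (d - k)

/-- The shape obtained from `λ` by adding one box at the end of row `i`. -/
def stepShape (lam : ℕ → ℕ) (i : ℕ) : ℕ → ℕ :=
  fun t => if t = i then lam i + 1 else lam t

/-- The box-adding map `f_i` on fillings: swap columns `j = λ_i + i - d` and `j + 1`
(in rows `1, …, i-1`), and put the value `N + 1` in the new box `(i, j)`. -/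
def addBox (d : ℕ) (lam : ℕ → ℕ) (i : ℕ) (N : ℕ) (B : ℤ × ℤ → ℕ) : ℤ × ℤ → ℕ :=
  fun p =>
    if p = ((i : ℤ), (lam i : ℤ) + (i : ℤ) - (d : ℤ)) then N + 1
    else if 1 ≤ p.1 ∧ p.1 < (i : ℤ) ∧ p.2 = (lam i : ℤ) + (i : ℤ) - (d : ℤ) then
      B (p.1, p.2 + 1)
    else if 1 ≤ p.1 ∧ p.1 < (i : ℤ) ∧ p.2 = (lam i : ℤ) + (i : ℤ) - (d : ℤ) + 1 then
      B (p.1, p.2 - 1)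
    else B p

/-- Successively apply the box-adding maps along a list of row indices,
tracking the current shape. -/
def FmapAux (d : ℕ) : List ℕ → (ℕ → ℕ) → (ℤ × ℤ → ℕ) → (ℤ × ℤ → ℕ)
  | [], _, B => B
  | i :: rest, lam, B => FmapAux d rest (stepShape lam i) (addBox d lam i (sizeP d lam) B)

/-- The shape after successively adding boxes along a list of row indices. -/
def shapeAux : List ℕ → (ℕ → ℕ) → (ℕ → ℕ)
  | [], lam => lam
  | i :: rest, lam => shapeAux rest (stepShape lam i)

/-- The list of row indices `1^{μ_1} 2^{μ_2} ⋯ d^{μ_d}` used to pad `λ` to `Z(d,r)`. -/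
def rowsList (d r : ℕ) (lam : ℕ → ℕ) : List ℕ :=
  (List.range d).flatMap fun k => List.replicate (muF d r lam (k + 1)) (k + 1)

/-- `BS(Z(d,r))|_λ`: balanced tableaux of shape `Z(d,r)` such that for each
`i ∈ {1,…,d}` the entries `N + σ_{i-1} + 1, …, N + σ_i` all occur in row `i`. -/
def BSRestricted (d r : ℕ) (lam : ℕ → ℕ) : Set (ℤ × ℤ → ℕ) :=
  {T | IsBalanced d (Zlam d r) T ∧ ∀ i : ℕ, 1 ≤ i → i ≤ d →
    ∀ k : ℕ, sizeP d lam + sigmaF d r lam (i - 1) + 1 ≤ k →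
      k ≤ sizeP d lam + sigmaF d r lam i →
      ∃ c : ℤ, ((i : ℤ), c) ∈ Diagram d (Zlam d r) ∧ T ((i : ℤ), c) = k}

/-- `w ∈ W(B_n)` pattern embeds the signed pattern `v` (given as its one-line
notation, a list of nonzero integers). -/
def PatternEmbeds (n : ℕ) (w : Equiv.Perm ℤ) (v : List ℤ) : Prop :=
  ∃ idx : Fin v.length → ℤ, StrictMono idx ∧
    (∀ j, 1 ≤ idx j ∧ idx j ≤ (n : ℤ)) ∧
    (∀ j, 0 < w (idx j) ↔ 0 < v.get j) ∧
    (∀ j k, |w (idx j)| < |w (idx k)| ↔ |v.get j| < |v.get k|)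


/-! ### Signed permutations, inversions -/

def PI (w : Equiv.Perm ℤ) : Set (ℤ × ℤ) :=
  {b | -b.2 < b.1 ∧ b.1 < b.2 ∧ w b.2 < w b.1}

def Adj (w : Equiv.Perm ℤ) (a : ℕ) (b : ℤ × ℤ) : Prop :=
  (w b.1 = a ∧ w b.2 = a + 1) ∨ (w b.1 = a + 1 ∧ w b.2 = a) ∨
  (w b.1 = -a - 1 ∧ w b.2 = -a) ∨ (w b.1 = -a ∧ w b.2 = -a - 1)

def nrm (p q : ℤ) : ℤ × ℤ :=
  if -p < q then (p, q) else if q < -p then (-q, -p) else (0, q)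

theorem sB_apply (a : ℕ) (x : ℤ) : sB a x =
    if a = 0 then (if x = 1 then -1 else if x = -1 then 1 else x)
    else if x = a then a + 1 else if x = a + 1 then a else if x = -a then -a - 1
      else if x = -a - 1 then -a else x := by
  unfold sB
  by_cases h : a = 0
  · simp [h, Equiv.swap_apply_def]
  · simp only [h, if_false, Equiv.Perm.mul_apply, Equiv.swap_apply_def]
    split_ifs <;> omega

theorem sB_lt (a : ℕ) (y z : ℤ) (h1 : y ≠ z) (h2 : y ≠ -z)
    (h : ¬ ((y = a ∧ z = a + 1) ∨ (y = a + 1 ∧ z = a) ∨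
  (y = -a - 1 ∧ z = -a) ∨ (y = -a ∧ z = -a - 1))) : sB a z < sB a y ↔ z < y := by
  rw [sB_apply, sB_apply]
  split_ifs <;> omega

theorem sB_lt' (a : ℕ) (y z : ℤ) (h1 : y ≠ z) (h2 : y ≠ -z)
    (h : ((y = a ∧ z = a + 1) ∨ (y = a + 1 ∧ z = a) ∨
  (y = -a - 1 ∧ z = -a) ∨ (y = -a ∧ z = -a - 1))) : sB a z < sB a y ↔ ¬ z < y := by
  rw [sB_apply, sB_apply]
  split_ifs <;> omega

theorem sB_signed (n a : ℕ) (h : a < n) : IsSignedPerm n (sB a) := by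
  refine ⟨fun i => ?_, fun i hi => ?_⟩
  · rw [sB_apply, sB_apply]; split_ifs <;> omega
  · rw [sB_apply]
    rcases abs_cases i with ⟨h1, h2⟩ | ⟨h1, h2⟩ <;> split_ifs <;> omega

theorem sB_sq (a : ℕ) : sB a * sB a = 1 := by
  ext x
  have h : sB a (sB a x) = x := by
    generalize hy : sB a x = y
    rw [sB_apply] at hy ⊢
    split_ifs at hy ⊢ <;> omega
  simpa using h

theorem signed_mul {n : ℕ} {v w : Equiv.Perm ℤ} (hv : IsSignedPerm n v) (hw : IsSignedPerm n w) :
    IsSignedPerm n (v * w) := by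
  refine ⟨fun i => ?_, fun i hi => ?_⟩
  · simp [hw.1, hv.1]
  · simp [hw.2 i hi, hv.2 i hi]

theorem signed_one (n : ℕ) : IsSignedPerm n 1 := ⟨fun _ => rfl, fun _ _ => rfl⟩

theorem wordProd_cons (a : ℕ) (L : List ℕ) : wordProd (a :: L) = sB a * wordProd L := by
  simp [wordProd]

theorem wordProd_append (L K : List ℕ) : wordProd (L ++ K) = wordProd L * wordProd K := by
  simp [wordProd]

theorem wordProd_signed (n : ℕ) (L : List ℕ) (h : ∀ a ∈ L, a < n) :
    IsSignedPerm n (wordProd L) := by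
  induction L with
  | nil => exact signed_one n
  | cons a L ih =>
    rw [wordProd_cons]
    exact signed_mul (sB_signed n a (h a (by simp))) (ih fun b hb => h b (by simp [hb]))

theorem signed_zero {n : ℕ} {w : Equiv.Perm ℤ} (hw : IsSignedPerm n w) : w 0 = 0 := by
  have := hw.1 0; simp at this; omega

theorem signed_bd {n : ℕ} {w : Equiv.Perm ℤ} (hw : IsSignedPerm n w) (i : ℤ) (hi : |i| ≤ n) :
    |w i| ≤ n := by
  by_contra h
  push Not at h
  have := w.injective (hw.2 _ h)
  rw [this] at h; omega

theorem PI_finite {n : ℕ} {w : Equiv.Perm ℤ} (hw : IsSignedPerm n w) : (PI w).Finite := by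
  apply (Set.Finite.prod (Set.finite_Icc (-(n:ℤ)) n) (Set.finite_Icc (-(n:ℤ)) n)).subset
  rintro ⟨p, q⟩ ⟨h1, h2, h3⟩
  simp only at h1 h2 h3
  have hq : q ≤ n := by
    by_contra hq
    push Not at hq
    rw [hw.2 q (by rw [abs_of_pos (by omega)]; exact hq)] at h3
    by_cases hp : |p| ≤ n
    · have := signed_bd hw p hp
      have := le_abs_self (w p)
      omega
    · rw [hw.2 p (by omega)] at h3; omega
  simp only [Set.mem_prod, Set.mem_Icc]; omega

theorem PI_le {n : ℕ} {w : Equiv.Perm ℤ} (hw : IsSignedPerm n w) {p q : ℤ} (h : (p, q) ∈ PI w) :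
    q ≤ n := by
  obtain ⟨h1, h2, h3⟩ := h
  simp only at h1 h2 h3
  by_contra hq
  push Not at hq
  rw [hw.2 q (by rw [abs_of_pos (by omega)]; exact hq)] at h3
  by_cases hp : |p| ≤ n
  · have := signed_bd hw p hp
    have := le_abs_self (w p)
    omega
  · rw [hw.2 p (by omega)] at h3; omega

theorem nrm_mem {n : ℕ} {w : Equiv.Perm ℤ} (hw : IsSignedPerm n w) {p q : ℤ} (h : p < q) :
    nrm p q ∈ PI w ↔ w q < w p := by
  have h1 := hw.1 p
  have h2 := hw.1 q
  have h0 := signed_zero hw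
  unfold nrm PI
  split_ifs with ha hb
  · simp; omega
  · simp only [Set.mem_ofPred_eq]; rw [h1, h2]; omega
  · have : q = -p := by omega
    subst this
    simp only [Set.mem_ofPred_eq]; rw [h0]; omega

theorem signed_ne {n : ℕ} {w : Equiv.Perm ℤ} (hw : IsSignedPerm n w) {p q : ℤ}
    (h1 : -q < p) (h2 : p < q) : w p ≠ w q ∧ w p ≠ - w q := by
  refine ⟨fun h => ?_, fun h => ?_⟩
  · have := w.injective h; omega
  · rw [← hw.1] at h
    have := w.injective h; omega

theorem PI_sB_adj {n : ℕ} {w : Equiv.Perm ℤ} (hw : IsSignedPerm n w) {a : ℕ} {b : ℤ × ℤ}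
    (h1 : -b.2 < b.1) (h2 : b.1 < b.2) (h : Adj w a b) : b ∈ PI (sB a * w) ↔ b ∉ PI w := by
  have h3 := signed_ne hw h1 h2
  have := sB_lt' a _ _ h3.1 h3.2 h
  simp only [PI, Set.mem_ofPred_eq, Equiv.Perm.mul_apply, this]
  tauto

theorem PI_sB_not_adj {n : ℕ} {w : Equiv.Perm ℤ} (hw : IsSignedPerm n w) {a : ℕ} {b : ℤ × ℤ}
    (h : ¬ Adj w a b) : b ∈ PI (sB a * w) ↔ b ∈ PI w := by
  simp only [PI, Set.mem_ofPred_eq, Equiv.Perm.mul_apply]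
  constructor
  · rintro ⟨h1, h2, h3⟩
    have h4 := signed_ne hw h1 h2
    exact ⟨h1, h2, (sB_lt a _ _ h4.1 h4.2 h).1 h3⟩
  · rintro ⟨h1, h2, h3⟩
    have h4 := signed_ne hw h1 h2
    exact ⟨h1, h2, (sB_lt a _ _ h4.1 h4.2 h).2 h3⟩

theorem adj_exists {n : ℕ} {w : Equiv.Perm ℤ} (hw : IsSignedPerm n w) (a : ℕ) :
    ∃ b : ℤ × ℤ, -b.2 < b.1 ∧ b.1 < b.2 ∧ Adj w a b := by
  obtain ⟨p, hp⟩ := w.surjective (a : ℤ)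
  obtain ⟨q, hq⟩ := w.surjective ((a : ℤ) + 1)
  have hp' := hw.1 p
  have hq' := hw.1 q
  have h1 : p ≠ q := by rintro rfl; omega
  have h2 : p ≠ -q := by rintro rfl; omega
  have : (-q < p ∧ p < q) ∨ (q < p ∧ p < -q) ∨ (-p < q ∧ q < p) ∨ (p < q ∧ q < -p) := by omega
  unfold Adj
  rcases this with h | h | h | h
  · exact ⟨(p, q), h.1, h.2, by simp [hp, hq]⟩
  · exact ⟨(-p, -q), by simp; omega, by simp; omega, by simp [hp', hq', hp, hq]; omega⟩
  · exact ⟨(q, p), h.1, h.2, by simp [hp, hq]⟩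
  · exact ⟨(-q, -p), by simp; omega, by simp; omega, by simp [hp', hq', hp, hq]; omega⟩

theorem adj_unique {n : ℕ} {w : Equiv.Perm ℤ} (hw : IsSignedPerm n w) {a : ℕ} {b c : ℤ × ℤ}
    (hb1 : -b.2 < b.1) (hb2 : b.1 < b.2) (hb : Adj w a b)
    (hc1 : -c.2 < c.1) (hc2 : c.1 < c.2) (hc : Adj w a c) : b = c := by
  obtain ⟨p, hp⟩ := w.surjective (a : ℤ)
  obtain ⟨q, hq⟩ := w.surjective ((a : ℤ) + 1)
  have hp' : w (-p) = -a := by rw [hw.1, hp]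
  have hq' : w (-q) = -a - 1 := by rw [hw.1, hq]; ring
  have key : ∀ b : ℤ × ℤ, Adj w a b → (b.1 = p ∧ b.2 = q) ∨ (b.1 = q ∧ b.2 = p) ∨
      (b.1 = -q ∧ b.2 = -p) ∨ (b.1 = -p ∧ b.2 = -q) := by
    intro b hb
    unfold Adj at hb
    rw [← hq', ← hp', ← hq, ← hp] at hb
    simpa [w.injective.eq_iff] using hb
  have h1 := key b hb
  have h2 := key c hc
  ext <;> omega

theorem adj_letter {w : Equiv.Perm ℤ} {a a' : ℕ} {b : ℤ × ℤ} (h : Adj w a b) (h' : Adj w a' b) :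
    a = a' := by
  unfold Adj at *; omega

theorem adj_sB {w : Equiv.Perm ℤ} {a : ℕ} {b : ℤ × ℤ} (h : Adj w a b)
    (h2 : w b.1 ≠ w b.2 ∧ w b.1 ≠ - w b.2) (h0 : w b.2 ≠ 0) :
    Adj (sB a * w) a b := by
  unfold Adj at *
  simp only [Equiv.Perm.mul_apply, sB_apply]
  split_ifs <;> omega

/-- going up: the inversion set gains exactly `b`. -/
theorem PI_up {n : ℕ} {w : Equiv.Perm ℤ} (hw : IsSignedPerm n w) {a : ℕ} {b : ℤ × ℤ}
    (h1 : -b.2 < b.1) (h2 : b.1 < b.2) (h : Adj w a b) (hb : b ∉ PI w) :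
    PI (sB a * w) = insert b (PI w) := by
  ext c
  simp only [Set.mem_insert_iff]
  by_cases hc : c = b
  · subst hc; simp [PI_sB_adj hw h1 h2 h, hb]
  · simp only [hc, false_or]
    by_cases hl : -c.2 < c.1 ∧ c.1 < c.2
    · exact PI_sB_not_adj hw fun h' => hc (adj_unique hw hl.1 hl.2 h' h1 h2 h)
    · simp only [PI, Set.mem_ofPred_eq]; tauto

theorem PI_down {n : ℕ} {w : Equiv.Perm ℤ} (hw : IsSignedPerm n w) {a : ℕ} {b : ℤ × ℤ}
    (h1 : -b.2 < b.1) (h2 : b.1 < b.2) (h : Adj w a b) (hb : b ∈ PI w) :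
    PI (sB a * w) = PI w \ {b} := by
  ext c
  simp only [Set.mem_sdiff, Set.mem_singleton_iff]
  by_cases hc : c = b
  · subst hc; simp [PI_sB_adj hw h1 h2 h, hb]
  · simp only [hc, not_false_eq_true, and_true]
    by_cases hl : -c.2 < c.1 ∧ c.1 < c.2
    · exact PI_sB_not_adj hw fun h' => hc (adj_unique hw hl.1 hl.2 h' h1 h2 h)
    · simp only [PI, Set.mem_ofPred_eq]; tauto

theorem PI_card_up {n : ℕ} {w : Equiv.Perm ℤ} (hw : IsSignedPerm n w) {a : ℕ} :
    (PI (sB a * w)).ncard ≤ (PI w).ncard + 1 := by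
  obtain ⟨b, h1, h2, h⟩ := adj_exists hw a
  by_cases hb : b ∈ PI w
  · rw [PI_down hw h1 h2 h hb]
    exact (Set.ncard_le_ncard Set.sdiff_subset (PI_finite hw)).trans (by omega)
  · rw [PI_up hw h1 h2 h hb]
    exact Set.ncard_insert_le _ _

theorem PI_one : PI 1 = ∅ := by
  ext b; simp [PI]; intros; omega

theorem PI_word_le (n : ℕ) (L : List ℕ) (h : ∀ a ∈ L, a < n) :
    (PI (wordProd L)).ncard ≤ L.length := by
  induction L with
  | nil => simp [wordProd, PI_one]
  | cons a L ih =>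
    have h' : ∀ b ∈ L, b < n := fun b hb => h b (by simp [hb])
    rw [wordProd_cons]
    have := PI_card_up (wordProd_signed n L h') (a := a)
    have := ih h'
    simp; omega

theorem PI_full {n : ℕ} {v w : Equiv.Perm ℤ} (hv : IsSignedPerm n v) (hw : IsSignedPerm n w)
    (h : PI v ⊆ PI w) {p q : ℤ} (hpq : p < q) (hi : v q < v p) : w q < w p :=
  (nrm_mem hw hpq).1 (h ((nrm_mem hv hpq).2 hi))

theorem PI_inj {n : ℕ} {v w : Equiv.Perm ℤ} (hv : IsSignedPerm n v) (hw : IsSignedPerm n w)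
    (h : PI v = PI w) : v = w := by
  have mono : ∀ y z : ℤ, y < z → w (v.symm y) < w (v.symm z) := by
    intro y z hyz
    have hne : v.symm y ≠ v.symm z := fun h => by have := v.symm.injective h; omega
    rcases lt_or_gt_of_ne hne with h1 | h1
    · by_contra hc
      have hne' : w (v.symm y) ≠ w (v.symm z) := fun h => hne (w.injective h)
      have := PI_full hw hv h.ge h1 (by omega)
      simp at this; omega
    · apply PI_full hv hw h.le h1
      simpa using hyz
  have fix : ∀ y : ℤ, (n : ℤ) < |y| → w (v.symm y) = y := by
    intro y hy
    have : v.symm y = y := by rw [Equiv.symm_apply_eq, hv.2 y hy]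
    rw [this, hw.2 y hy]
  have m2 : Monotone (fun y : ℤ => w (v.symm y) - y) := by
    apply monotone_int_of_le_succ
    intro y
    have := mono y (y + 1) (by omega)
    omega
  ext x
  have a1 := fix (-(|v x| + n + 1)) (by rw [abs_neg, abs_of_nonneg (by positivity)]; have := abs_nonneg (v x); omega)
  have a2 := fix (|v x| + n + 1) (by rw [abs_of_nonneg (by positivity)]; have := abs_nonneg (v x); omega)
  have b1 := @m2 (-(|v x| + n + 1)) (v x) (by have := neg_abs_le (v x); omega)
  have b2 := @m2 (v x) (|v x| + n + 1) (by have := le_abs_self (v x); omega)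
  simp only [a1, a2, sub_self, Equiv.symm_apply_apply] at b1 b2
  omega

/-- from an adjacent (in value) pair to an adjacent label. -/
theorem adj_of_val {n : ℕ} {v : Equiv.Perm ℤ} (hv : IsSignedPerm n v) {p q : ℤ} (hpq : p < q)
    (h : v q = v p + 1 ∨ v p = v q + 1) : 
    ∃ a : ℕ, Adj v a (nrm p q) := by
  have h0 := signed_zero hv
  have hp := hv.1 p
  have hq := hv.1 q
  unfold nrm Adj
  split_ifs with ha hb
  · by_cases hs : 0 ≤ v q ∧ 0 ≤ v p
    · exact ⟨(min (v p) (v q)).toNat, by simp only; omega⟩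
    · exact ⟨(min (-v p) (-v q)).toNat, by simp only; omega⟩
  · simp only [hp, hq]
    by_cases hs : 0 ≤ v q ∧ 0 ≤ v p
    · exact ⟨(min (v p) (v q)).toNat, by omega⟩
    · exact ⟨(min (-v p) (-v q)).toNat, by omega⟩
  · have : q = - p := by omega
    subst this
    omega

theorem nrm_lab {p q : ℤ} (h : p < q) : -(nrm p q).2 < (nrm p q).1 ∧ (nrm p q).1 < (nrm p q).2 := by
  unfold nrm; split_ifs <;> constructor <;> simp <;> omega

theorem adj_lt {n : ℕ} {w : Equiv.Perm ℤ} (hw : IsSignedPerm n w) {a : ℕ} {b : ℤ × ℤ}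
    (h : Adj w a b) (h1 : -b.2 < b.1) (h2 : b.1 < b.2) (hb : b.2 ≤ n) : a < n := by
  have e1 := abs_le.1 (signed_bd hw b.1 (abs_le.2 (by omega)))
  have e2 := abs_le.1 (signed_bd hw b.2 (abs_le.2 (by omega)))
  unfold Adj at h
  omega

theorem ext_step {n : ℕ} {v w : Equiv.Perm ℤ} (hv : IsSignedPerm n v) (hw : IsSignedPerm n w)
    (h : PI v ⊆ PI w) (hne : PI v ≠ PI w) :
    ∃ a b, a < n ∧ -b.2 < b.1 ∧ b.1 < b.2 ∧ Adj v a b ∧ b ∉ PI v ∧ b ∈ PI w := by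
  have hex : ∃ m : ℕ, ∃ p q : ℤ, p < q ∧ w q < w p ∧ v p < v q ∧ v q - v p = m := by
    obtain ⟨⟨p, q⟩, hb, hb'⟩ := Set.exists_of_ssubset (h.ssubset_of_ne hne)
    have hb2 := hb
    obtain ⟨h1, h2, h3⟩ := hb
    have := (signed_ne hv h1 h2).1
    simp only [PI, Set.mem_ofPred_eq] at h1 h2 h3 hb' this
    exact ⟨(v q - v p).toNat, p, q, h2, h3, by omega, by omega⟩
  classical
  obtain ⟨p, q, hpq, hwi, hvi, hm⟩ := Nat.find_spec hex
  have hmin := fun m hm => Nat.find_min hex (m := m) hm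
  have hone : v q = v p + 1 := by
    by_contra hne1
    obtain ⟨k, hk⟩ := v.surjective (v p + 1)
    have c1 : ¬ (p < k ∧ w k < w p) := fun hc =>
      hmin 1 (by omega) ⟨p, k, hc.1, hc.2, by omega, by push_cast; omega⟩
    have c2 : ¬ (k < q ∧ w q < w k) := fun hc =>
      hmin (v q - v k).toNat (by omega) ⟨k, q, hc.1, hc.2, by omega, by omega⟩
    have n1 : k ≠ p := by rintro rfl; omega
    have n2 : k ≠ q := by rintro rfl; omega
    rcases lt_or_gt_of_ne n1 with h1 | h1
    · have := PI_full hv hw h h1 (by omega)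
      omega
    · rcases lt_or_gt_of_ne n2 with h2 | h2
      · omega
      · have := PI_full hv hw h h2 (by omega)
        omega
  obtain ⟨a, ha⟩ := adj_of_val hv hpq (Or.inl hone)
  have hl := nrm_lab hpq
  have hin := (nrm_mem hw hpq).2 hwi
  refine ⟨a, nrm p q, adj_lt hv ha hl.1 hl.2 (PI_le hw hin), hl.1, hl.2, ha, ?_, hin⟩
  rw [nrm_mem hv hpq]; omega

theorem ext_word {n : ℕ} {w : Equiv.Perm ℤ} (hw : IsSignedPerm n w) (m : ℕ) :
    ∀ v : Equiv.Perm ℤ, IsSignedPerm n v → PI v ⊆ PI w → (PI v).ncard + m = (PI w).ncard →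
    ∃ L : List ℕ, (∀ a ∈ L, a < n) ∧ w = wordProd L * v ∧ L.length = m := by
  induction m with
  | zero =>
    intro v hv h hc
    have : PI v = PI w := Set.eq_of_subset_of_ncard_le h (by omega) (PI_finite hw)
    exact ⟨[], by simp, by simp [wordProd, PI_inj hv hw this], rfl⟩
  | succ m ih =>
    intro v hv h hc
    obtain ⟨a, b, ha, h1, h2, hadj, hb, hb'⟩ := ext_step hv hw h (by intro h; rw [h] at hc; omega)
    have hup := PI_up hv h1 h2 hadj hb
    obtain ⟨L, hL, hL2, hL3⟩ := ih (sB a * v) (signed_mul (sB_signed n a ha) hv)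
      (by rw [hup]; exact Set.insert_subset hb' h)
      (by rw [hup, Set.ncard_insert_of_notMem hb (PI_finite hv)]; omega)
    refine ⟨L ++ [a], ?_, ?_, by simp [hL3]⟩
    · intro c hc; simp at hc; rcases hc with hc | rfl
      · exact hL c hc
      · exact ha
    · rw [hL2, wordProd_append]; simp [wordProd, mul_assoc]

def Red (n : ℕ) (w : Equiv.Perm ℤ) (L : List ℕ) : Prop :=
  (∀ a ∈ L, a < n) ∧ wordProd L = w ∧ L.length = (PI w).ncard

theorem lengthB_eq {n : ℕ} {w : Equiv.Perm ℤ} (hw : IsSignedPerm n w) :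
    lengthB n w = (PI w).ncard := by
  obtain ⟨L, h1, h2, h3⟩ := ext_word hw (PI w).ncard 1 (signed_one n) (by simp [PI_one])
    (by simp [PI_one])
  unfold lengthB
  apply le_antisymm
  · exact Nat.sInf_le ⟨L, h1, by simpa using h2.symm, h3⟩
  · apply le_csInf
    · exact ⟨_, L, h1, by simpa using h2.symm, h3⟩
    · rintro m ⟨L, h1, rfl, rfl⟩
      exact PI_word_le n L h1

theorem isReducedWord_iff {n : ℕ} {w : Equiv.Perm ℤ} (hw : IsSignedPerm n w) (L : List ℕ) :
    IsReducedWord n w L ↔ Red n w L := by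
  unfold IsReducedWord Red; rw [lengthB_eq hw]

/-! ### Balanced fillings of inversion sets -/

noncomputable def cntF (X : ℤ × ℤ → ℕ) (p q : ℤ) : ℕ :=
  ∑ k ∈ Finset.Ioo p q, ((if X (nrm p q) < X (nrm p k) then 1 else 0) +
    (if X (nrm p q) < X (nrm k q) then 1 else 0))

def Bal (w : Equiv.Perm ℤ) (M : ℕ) (X : ℤ × ℤ → ℕ) : Prop :=
  Set.BijOn X (PI w) (Set.Icc 1 M) ∧ (∀ b, b ∉ PI w → X b = 0) ∧
    ∀ b ∈ PI w, (cntF X b.1 b.2 : ℤ) = b.2 - b.1 - 1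

theorem nrm_neg {p q : ℤ} (h : p < q) : nrm (-q) (-p) = nrm p q := by
  unfold nrm
  split_ifs <;> ext <;> simp <;> omega

theorem nrm_self {p q : ℤ} (h : -q < p) : nrm p q = (p, q) := by
  unfold nrm; rw [if_pos (by omega)]

theorem cntF_neg (X : ℤ × ℤ → ℕ) {p q : ℤ} (h : p < q) : cntF X (-q) (-p) = cntF X p q := by
  unfold cntF
  apply Finset.sum_nbij' (fun k => -k) (fun k => -k)
  · intro k hk; simp at *; omega
  · intro k hk; simp at *; omega
  · intro k hk; simp
  · intro k hk; simp
  · intro k hk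
    simp only [Finset.mem_Ioo] at hk
    rw [nrm_neg h]
    have e1 : nrm (-q) k = nrm (-k) q := by
      have := nrm_neg (p := -k) (q := q) (by omega); simpa using this
    have e2 : nrm k (-p) = nrm p (-k) := by
      have := nrm_neg (p := p) (q := -k) (by omega); simpa using this
    rw [e1, e2, add_comm]

theorem Bal.full {n : ℕ} {w : Equiv.Perm ℤ} (hw : IsSignedPerm n w) {M : ℕ} {X : ℤ × ℤ → ℕ}
    (hX : Bal w M X) {p q : ℤ} (h : p < q) (h2 : p ≠ -q) (hi : w q < w p) :
    (cntF X p q : ℤ) = q - p - 1 := by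
  rcases lt_or_gt_of_ne h2 with h3 | h3
  · rw [← cntF_neg X h]
    have := hX.2.2 (-q, -p) ?_
    · simp only at this; rw [this]; ring
    · have := (nrm_mem hw h).2 hi
      rw [← nrm_neg h, nrm_self (by omega)] at this
      exact this
  · have := hX.2.2 (p, q) ?_
    · simpa using this
    · have := (nrm_mem hw h).2 hi
      rwa [nrm_self h3] at this

theorem Bal.pos_iff {n : ℕ} {w : Equiv.Perm ℤ} (hw : IsSignedPerm n w) {M : ℕ} {X : ℤ × ℤ → ℕ}
    (hX : Bal w M X) {p q : ℤ} (h : p < q) : 0 < X (nrm p q) ↔ w q < w p := by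
  rw [← nrm_mem hw h]
  constructor
  · intro h1
    by_contra h2
    rw [hX.2.1 _ h2] at h1; omega
  · intro h1
    exact (hX.1.mapsTo h1).1

/-- no pair in between: every term is one -/
theorem Bal.no_pair {n : ℕ} {w : Equiv.Perm ℤ} (hw : IsSignedPerm n w) {M : ℕ} {X : ℤ × ℤ → ℕ}
    (hX : Bal w M X) {p q : ℤ} (h : p < q) (h2 : p ≠ -q) (hi : w q < w p)
    (hno : ∀ k, p < k → k < q → ¬ (w q < w k ∧ w k < w p)) {k : ℤ} (hk1 : p < k) (hk2 : k < q) :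
    (w k < w p → X (nrm p q) < X (nrm p k)) ∧ (w q < w k → X (nrm p q) < X (nrm k q)) := by
  have hc := hX.full hw h h2 hi
  unfold cntF at hc
  have hle : ∀ j ∈ Finset.Ioo p q, ((if X (nrm p q) < X (nrm p j) then 1 else 0) +
    (if X (nrm p q) < X (nrm j q) then 1 else 0)) ≤ 1 := by
    intro j hj
    simp only [Finset.mem_Ioo] at hj
    have a1 := hX.pos_iff hw hj.1
    have a2 := hX.pos_iff hw hj.2
    have := hno j hj.1 hj.2
    split_ifs <;> omega
  have hsum : ∑ j ∈ Finset.Ioo p q, ((if X (nrm p q) < X (nrm p j) then 1 else 0) +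
    (if X (nrm p q) < X (nrm j q) then 1 else 0)) = ∑ j ∈ Finset.Ioo p q, 1 := by
    rw [Finset.sum_const, Int.card_Ioo]
    simp only [smul_eq_mul, mul_one]
    omega
  have := (Finset.sum_eq_sum_iff_of_le hle).1 hsum k (by simp [hk1, hk2])
  have a1 := hX.pos_iff hw hk1
  have a2 := hX.pos_iff hw hk2
  have := hno k hk1 hk2
  split_ifs at * <;> omega

theorem nrm_left_ne {p q k : ℤ} (h : -q < p) (h1 : p < k) (h2 : k < q) :
    nrm p k ≠ (p, q) := by
  unfold nrm
  split_ifs <;> simp <;> omega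

theorem Bal.min_adj {n : ℕ} {w : Equiv.Perm ℤ} (hw : IsSignedPerm n w) {M : ℕ} {X : ℤ × ℤ → ℕ}
    (hX : Bal w M X) {p q : ℤ} (hm : (p, q) ∈ PI w) (h1 : X (p, q) = 1) : w p = w q + 1 := by
  have hlab := hm
  obtain ⟨l1, l2, hi⟩ := hlab
  simp only at l1 l2 hi
  have hself : nrm p q = (p, q) := nrm_self l1
  have hno : ∀ k, p < k → k < q → ¬ (w q < w k ∧ w k < w p) := by
    have hc := hX.full hw l2 (by omega) hi
    unfold cntF at hc
    have hle : ∀ j ∈ Finset.Ioo p q, 1 ≤ ((if X (nrm p q) < X (nrm p j) then 1 else 0) +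
      (if X (nrm p q) < X (nrm j q) then 1 else 0)) ∧
      ((w q < w j ∧ w j < w p) → ((if X (nrm p q) < X (nrm p j) then 1 else 0) +
      (if X (nrm p q) < X (nrm j q) then 1 else 0)) = 2) := by
      intro j hj
      simp only [Finset.mem_Ioo] at hj
      have a1 := hX.pos_iff hw hj.1
      have a2 := hX.pos_iff hw hj.2
      have b1 : X (nrm p j) ≠ 1 := by
        intro hb
        have hmem := (nrm_mem hw hj.1).2 (a1.1 (by omega))
        exact nrm_left_ne l1 hj.1 hj.2 (hX.1.injOn hmem hm (by rw [hb, h1]))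
      have b2 : X (nrm j q) ≠ 1 := by
        intro hb
        have hmem := (nrm_mem hw hj.2).2 (a2.1 (by omega))
        have := (hX.1.injOn hmem hm (by rw [hb, h1]))
        rw [nrm_self (by omega)] at this
        simp at this; omega
      have b3 : w j ≠ w p := fun h => by have := w.injective h; omega
      rw [hself, h1]
      split_ifs <;> omega
    intro k hk1 hk2 hk
    have : ∑ j ∈ Finset.Ioo p q, 1 < ∑ j ∈ Finset.Ioo p q, ((if X (nrm p q) < X (nrm p j) then 1 else 0) +
      (if X (nrm p q) < X (nrm j q) then 1 else 0)) := by
      apply Finset.sum_lt_sum (fun j hj => (hle j hj).1)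
      refine ⟨k, by simp [hk1, hk2], ?_⟩
      rw [(hle k (by simp [hk1, hk2])).2 hk]; omega
    rw [Finset.sum_const, Int.card_Ioo] at this
    simp only [smul_eq_mul, mul_one] at this
    omega
  -- no value in between at the right
  have hR : ∀ m : ℕ, ¬ (w q < w (q + m) ∧ w (q + m) < w p) := by
    intro m
    induction m using Nat.strong_induction_on with
    | _ m ih =>
      rintro ⟨c1, c2⟩
      have hm0 : 0 < m := by
        rcases Nat.eq_zero_or_pos m with rfl | h
        · simp at c1
        · exact h
      have := (hX.no_pair hw (p := p) (q := q + m) (by omega) (by omega) c2 (by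
        rintro k k1 k2 ⟨k3, k4⟩
        rcases lt_trichotomy k q with h | h | h
        · exact hno k k1 h ⟨by omega, k4⟩
        · subst h; omega
        · apply ih (k - q).toNat (by omega)
          rw [show q + ((k - q).toNat : ℤ) = k by omega]
          omega) (k := q) l2 (by omega)).1 hi
      rw [hself, h1] at this
      have := (hX.pos_iff hw (p := p) (q := q + m) (by omega)).2 c2
      omega
  have hL : ∀ m : ℕ, ¬ (w q < w (p - m) ∧ w (p - m) < w p) := by
    intro m
    induction m using Nat.strong_induction_on with
    | _ m ih =>
      rintro ⟨c1, c2⟩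
      have hm0 : 0 < m := by
        rcases Nat.eq_zero_or_pos m with rfl | h
        · simp at c2
        · exact h
      have hz : p - m ≠ -q := by
        intro he
        rw [he, hw.1] at c1 c2
        have h0 := signed_zero hw
        have hp0 : 0 < p := by
          by_contra hp
          rcases eq_or_ne p 0 with rfl | hp'
          · omega
          · exact hno 0 (by omega) (by omega) (by omega)
        apply ih p.toNat (by omega)
        rw [show p - (p.toNat : ℤ) = 0 by omega]
        omega
      have := (hX.no_pair hw (p := p - m) (q := q) (by omega) hz c1 (by
        rintro k k1 k2 ⟨k3, k4⟩
        rcases lt_trichotomy k p with h | h | h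
        · apply ih (p - k).toNat (by omega)
          rw [show p - ((p - k).toNat : ℤ) = k by omega]
          omega
        · subst h; omega
        · exact hno k h k2 ⟨k3, by omega⟩) (k := p) (by omega) l2).2 hi
      rw [hself, h1] at this
      have := (hX.pos_iff hw (p := p - m) (q := q) (by omega)).2 c1
      omega
  by_contra hne
  obtain ⟨k, hk⟩ := w.surjective (w q + 1)
  have hk1 : w q < w k := by omega
  have hk2 : w k < w p := by omega
  rcases lt_or_ge p k with h | h
  · rcases lt_or_ge k q with h' | h'
    · exact hno k h h' ⟨hk1, hk2⟩
    · have := hR (k - q).toNat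
      rw [show q + ((k - q).toNat : ℤ) = k by omega] at this
      exact this ⟨hk1, hk2⟩
  · have := hL (p - k).toNat
    rw [show p - ((p - k).toNat : ℤ) = k by omega] at this
    exact this ⟨hk1, hk2⟩

theorem cntF_congr {X Y : ℤ × ℤ → ℕ} {p q : ℤ} (h0 : ∀ c, X (nrm p q) < X c ↔ Y (nrm p q) < Y c) :
    cntF X p q = cntF Y p q := by
  unfold cntF
  simp only [h0]

theorem Bal.down {n : ℕ} {w : Equiv.Perm ℤ} {M : ℕ} {X : ℤ × ℤ → ℕ}
    (hX : Bal w (M + 1) X) {v : Equiv.Perm ℤ} {b : ℤ × ℤ} (hb : b ∈ PI w) (h1 : X b = 1)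
    (hv : PI v = PI w \ {b}) : Bal v M (fun c => X c - 1) := by
  have hgt : ∀ c ∈ PI v, 2 ≤ X c := by
    intro c hc
    rw [hv] at hc
    have := (hX.1.mapsTo hc.1).1
    have : X c ≠ 1 := fun h => hc.2 (hX.1.injOn hc.1 hb (by rw [h, h1]))
    omega
  refine ⟨⟨?_, ?_, ?_⟩, ?_, ?_⟩
  · intro c hc
    have := hgt c hc
    rw [hv] at hc
    have := (hX.1.mapsTo hc.1).2
    simp only [Set.mem_Icc]; omega
  · intro c hc c' hc' h
    have g1 := hgt c hc
    have g2 := hgt c' hc'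
    rw [hv] at hc hc'
    exact hX.1.injOn hc.1 hc'.1 (by simp only at h; omega)
  · intro t ht
    simp only [Set.mem_Icc] at ht
    obtain ⟨c, hc, hc'⟩ := hX.1.surjOn (show t + 1 ∈ Set.Icc 1 (M + 1) by simp; omega)
    refine ⟨c, ?_, by simp [hc']⟩
    rw [hv]
    refine ⟨hc, ?_⟩
    rintro rfl
    omega
  · intro c hc
    by_cases h : c ∈ PI w
    · have : c = b := by
        by_contra hne; apply hc; rw [hv]; exact ⟨h, hne⟩
      subst this; simp [h1]
    · simp [hX.2.1 c h]
  · intro c hc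
    have hg := hgt c hc
    have hc2 := hc
    rw [hv] at hc
    rw [← hX.2.2 c hc.1]
    congr 1
    apply cntF_congr
    intro e
    rw [nrm_self hc2.1]
    show X c - 1 < X e - 1 ↔ X c < X e
    omega

open Classical in
theorem Bal.up {n : ℕ} {v : Equiv.Perm ℤ} (hv : IsSignedPerm n v) {M : ℕ} {X : ℤ × ℤ → ℕ}
    (hX : Bal v M X) {a : ℕ} {b : ℤ × ℤ} (hs : IsSignedPerm n (sB a * v))
    (l1 : -b.2 < b.1) (l2 : b.1 < b.2) (hadj : Adj v a b) (hb : b ∉ PI v) :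
    Bal (sB a * v) (M + 1) (fun c => if c ∈ PI (sB a * v) then X c + 1 else 0) := by
  have hup := PI_up hv l1 l2 hadj hb
  have hXb := hX.2.1 b hb
  have hbin : b ∈ PI (sB a * v) := by rw [hup]; simp
  set Y : ℤ × ℤ → ℕ := fun c => if c ∈ PI (sB a * v) then X c + 1 else 0 with hY
  have hYin : ∀ c ∈ PI (sB a * v), Y c = X c + 1 := fun c hc => by simp [hY, hc]
  have hYout : ∀ c, c ∉ PI (sB a * v) → Y c = 0 := fun c hc => by simp [hY, hc]
  have hcase : ∀ c ∈ PI (sB a * v), c = b ∨ c ∈ PI v := fun c hc => by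
    rw [hup] at hc; exact hc
  have hinc : ∀ c ∈ PI v, c ∈ PI (sB a * v) := fun c hc => by
    rw [hup]; right; exact hc
  have hpos : ∀ c ∈ PI v, 1 ≤ X c := fun c hc => (hX.1.mapsTo hc).1
  refine ⟨⟨?_, ?_, ?_⟩, hYout, ?_⟩
  · intro c hc
    rw [hYin c hc]
    rcases hcase c hc with rfl | h
    · simp [hXb]
    · have := hX.1.mapsTo h
      simp only [Set.mem_Icc] at *; omega
  · intro c hc c' hc' h
    rw [hYin c hc, hYin c' hc'] at h
    rcases hcase c hc with rfl | g <;> rcases hcase c' hc' with rfl | g'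
    · rfl
    · have := hpos _ g'; omega
    · have := hpos _ g; omega
    · exact hX.1.injOn g g' (by omega)
  · intro t ht
    simp only [Set.mem_Icc] at ht
    rcases Nat.lt_or_ge 1 t with h | h
    · obtain ⟨c, hc, hc'⟩ := hX.1.surjOn (show t - 1 ∈ Set.Icc 1 M by simp; omega)
      exact ⟨c, hinc c hc, by rw [hYin c (hinc c hc), hc']; omega⟩
    · exact ⟨b, hbin, by rw [hYin b hbin, hXb]; omega⟩
  · intro c hc
    rcases hcase c hc with rfl | g
    · -- the new inversion
      have hi : (sB a * v) c.2 < (sB a * v) c.1 := hbin.2.2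
      have hval : (sB a * v) c.1 = (sB a * v) c.2 + 1 := by
        have hne := signed_ne hv l1 l2
        have h0 : v c.2 ≠ 0 := fun h => by
          have := v.injective (h.trans (signed_zero hv).symm); omega
        have := adj_sB hadj hne h0
        unfold Adj at this
        omega
      set w := sB a * v
      have hone : ∀ j ∈ Finset.Ioo c.1 c.2, ((if Y (nrm c.1 c.2) < Y (nrm c.1 j) then 1 else 0) +
          (if Y (nrm c.1 c.2) < Y (nrm j c.2) then 1 else 0)) = 1 := by
        intro j hj
        simp only [Finset.mem_Ioo] at hj
        rw [nrm_self l1]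
        change ((if Y c < Y (nrm c.1 j) then 1 else 0) +
          (if Y c < Y (nrm j c.2) then 1 else 0)) = 1
        rw [hYin c hbin, hXb]
        have m1 := nrm_mem hs hj.1
        have m2 := nrm_mem hs hj.2
        have n1 : w j ≠ w c.1 := fun h => by have := w.injective h; omega
        have n2 : w j ≠ w c.2 := fun h => by have := w.injective h; omega
        rcases lt_or_gt_of_ne n1 with g1 | g1
        · have e1 : nrm c.1 j ∈ PI w := m1.2 g1
          have e2 : nrm j c.2 ∉ PI w := by rw [m2]; omega
          rw [hYin _ e1, hYout _ e2]
          rcases hcase _ e1 with g | g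
          · exact absurd g (nrm_left_ne l1 hj.1 hj.2)
          · have := hpos _ g
            rw [if_pos (by omega), if_neg (by omega)]
        · have e1 : nrm c.1 j ∉ PI w := by rw [m1]; omega
          have e2 : nrm j c.2 ∈ PI w := m2.2 (by omega)
          rw [hYin _ e2, hYout _ e1]
          rcases hcase _ e2 with g | g
          · rw [nrm_self (by omega)] at g
            have := congrArg Prod.fst g
            simp at this; omega
          · have := hpos _ g
            rw [if_neg (by omega), if_pos (by omega)]
      unfold cntF
      rw [Finset.sum_congr rfl hone, Finset.sum_const, Int.card_Ioo]
      simp only [smul_eq_mul, mul_one]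
      omega
    · rw [← hX.2.2 c g]
      congr 1
      apply cntF_congr
      intro e
      rw [nrm_self g.1]
      change Y c < Y e ↔ X c < X e
      rw [hYin c hc]
      have := hpos c g
      by_cases he : e ∈ PI (sB a * v)
      · rw [hYin e he]; omega
      · rw [hYout e he, hX.2.1 e (fun h => he (hinc e h))]; omega

/-! ### The filling of a word -/

open Classical in
noncomputable def fill : List ℕ → ℤ × ℤ → ℕ
  | [] => fun _ => 0
  | a :: L => fun c => if c ∈ PI (wordProd (a :: L)) then fill L c + 1 else 0

theorem Red.tail {n : ℕ} {w : Equiv.Perm ℤ} {a : ℕ} {L : List ℕ} (h : Red n w (a :: L)) :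
    Red n (wordProd L) L ∧ IsSignedPerm n (wordProd L) ∧ ∃ b : ℤ × ℤ, -b.2 < b.1 ∧ b.1 < b.2 ∧
      Adj (wordProd L) a b ∧ b ∉ PI (wordProd L) ∧ PI w = insert b (PI (wordProd L)) := by
  obtain ⟨h1, h2, h3⟩ := h
  have hL : ∀ b ∈ L, b < n := fun b hb => h1 b (by simp [hb])
  have hs := wordProd_signed n L hL
  have c1 := PI_word_le n L hL
  obtain ⟨b, l1, l2, hadj⟩ := adj_exists hs a
  rw [wordProd_cons] at h2
  have c2 := PI_card_up hs (a := a)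
  rw [h2] at c2
  simp only [List.length_cons] at h3
  have hb : b ∉ PI (wordProd L) := by
    intro hb
    have := PI_down hs l1 l2 hadj hb
    rw [h2] at this
    have : (PI w).ncard ≤ (PI (wordProd L)).ncard := by
      rw [this]; exact Set.ncard_le_ncard Set.sdiff_subset (PI_finite hs)
    omega
  refine ⟨⟨hL, rfl, by omega⟩, hs, b, l1, l2, hadj, hb, ?_⟩
  rw [← h2]
  exact PI_up hs l1 l2 hadj hb

theorem fill_in {a : ℕ} {L : List ℕ} {c : ℤ × ℤ} (h : c ∈ PI (wordProd (a :: L))) :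
    fill (a :: L) c = fill L c + 1 := by simp [fill, h]

theorem fill_out {a : ℕ} {L : List ℕ} {c : ℤ × ℤ} (h : c ∉ PI (wordProd (a :: L))) :
    fill (a :: L) c = 0 := by simp [fill, h]

open Classical in
theorem fill_bal {n : ℕ} (L : List ℕ) : ∀ w, Red n w L → Bal w L.length (fill L) := by
  induction L with
  | nil =>
    intro w h
    have : w = 1 := by rw [← h.2.1]; rfl
    subst this
    refine ⟨?_, ?_, ?_⟩ <;> simp [PI_one, fill]
  | cons a L ih =>
    intro w h
    obtain ⟨h1, h2, b, l1, l2, hadj, hb, hPI⟩ := h.tail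
    have := (ih _ h1).up h2 (signed_mul (sB_signed n a (h.1 a (by simp))) h2) l1 l2 hadj hb
    have hw : w = sB a * wordProd L := by rw [← h.2.1, wordProd_cons]
    have e : (fun c => if c ∈ PI (sB a * wordProd L) then fill L c + 1 else 0) = fill (a :: L) := by
      funext c
      by_cases hc : c ∈ PI (sB a * wordProd L)
      · rw [if_pos hc, fill_in (by rw [wordProd_cons]; exact hc)]
      · rw [if_neg hc, fill_out (by rw [wordProd_cons]; exact hc)]
    rw [e] at this
    rw [hw]
    exact this

theorem fill_cons {n : ℕ} {w : Equiv.Perm ℤ} {a : ℕ} {L : List ℕ} (h : Red n w (a :: L))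
    (c : ℤ × ℤ) (hc : c ∈ PI w) : fill (a :: L) c = fill L c + 1 := by
  have : c ∈ PI (wordProd (a :: L)) := by rw [h.2.1]; exact hc
  simp [fill, this]

theorem fill_inj {n : ℕ} (L : List ℕ) : ∀ (K : List ℕ) (w : Equiv.Perm ℤ), Red n w L → Red n w K →
    fill L = fill K → L = K := by
  induction L with
  | nil =>
    intro K w h h' _
    have : K.length = ([] : List ℕ).length := by rw [h'.2.2, h.2.2]
    exact (List.length_eq_zero_iff.1 this).symm
  | cons a L ih =>
    intro K w h h' hf
    have hlen : K.length = (a :: L).length := by rw [h'.2.2, h.2.2]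
    cases K with
    | nil => simp at hlen
    | cons a' K =>
      obtain ⟨r1, s1, b, l1, l2, hadj, hb, hPI⟩ := h.tail
      obtain ⟨r1', s1', b', l1', l2', hadj', hb', hPI'⟩ := h'.tail
      have B1 := fill_bal _ _ r1
      have B1' := fill_bal _ _ r1'
      have BB := fill_bal _ _ h
      have v1 : fill (a :: L) b = 1 := by
        rw [fill_cons h b (by rw [hPI]; simp), B1.2.1 b hb]
      have v1' : fill (a' :: K) b' = 1 := by
        rw [fill_cons h' b' (by rw [hPI']; simp), B1'.2.1 b' hb']
      have hbb : b = b' := by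
        apply BB.1.injOn (by rw [hPI]; simp) (by rw [hPI']; simp)
        rw [v1, hf, v1']
      subst hbb
      have hne := signed_ne s1 l1 l2
      have hne' := signed_ne s1' l1 l2
      have z : wordProd L b.2 ≠ 0 := fun h => by
        have := (wordProd L).injective (h.trans (signed_zero s1).symm); omega
      have z' : wordProd K b.2 ≠ 0 := fun h => by
        have := (wordProd K).injective (h.trans (signed_zero s1').symm); omega
      have A1 := adj_sB hadj hne z
      have A2 := adj_sB hadj' hne' z'
      rw [← wordProd_cons, h.2.1] at A1
      rw [← wordProd_cons, h'.2.1] at A2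
      have haa := adj_letter A1 A2
      subst haa
      have hv : wordProd L = wordProd K := by
        have e1 := h.2.1.trans h'.2.1.symm
        rw [wordProd_cons, wordProd_cons] at e1
        exact mul_left_cancel e1
      congr 1
      apply ih K (wordProd L) r1 (by rw [hv]; exact r1')
      funext c
      by_cases hc : c ∈ PI (wordProd L)
      · have hcw : c ∈ PI w := by rw [hPI]; right; exact hc
        have := congrFun hf c
        rw [fill_cons h c hcw, fill_cons h' c hcw] at this
        omega
      · rw [B1.2.1 c hc, B1'.2.1 c (by rw [← hv]; exact hc)]

theorem fill_surj {n : ℕ} (M : ℕ) : ∀ (w : Equiv.Perm ℤ) (X : ℤ × ℤ → ℕ), IsSignedPerm n w →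
    Bal w M X → ∃ L, Red n w L ∧ fill L = X ∧ L.length = M := by
  induction M with
  | zero =>
    intro w X hw hX
    have hemp : PI w = ∅ := by
      ext c
      simp only [Set.mem_empty_iff_false, iff_false]
      intro hc
      have := hX.1.mapsTo hc
      simp only [Set.mem_Icc] at this; omega
    have : w = 1 := (PI_inj (signed_one n) hw (by rw [hemp, PI_one])).symm
    subst this
    refine ⟨[], ⟨by simp, rfl, by simp [PI_one]⟩, ?_, rfl⟩
    funext c
    rw [hX.2.1 c (by rw [PI_one]; simp)]; rfl
  | succ M ih =>
    intro w X hw hX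
    obtain ⟨b, hb, hb1⟩ := hX.1.surjOn (show 1 ∈ Set.Icc 1 (M + 1) by simp)
    have hval := hX.min_adj hw (p := b.1) (q := b.2) hb hb1
    obtain ⟨a, ha⟩ := adj_of_val hw hb.2.1 (Or.inr hval)
    rw [nrm_self hb.1] at ha
    change Adj w a b at ha
    have han : a < n := adj_lt hw ha hb.1 hb.2.1 (PI_le hw hb)
    have hd := PI_down hw hb.1 hb.2.1 ha hb
    have hs := signed_mul (sB_signed n a han) hw
    obtain ⟨L, hL, hf, hlen⟩ := ih _ _ hs (hX.down (n := n) hb hb1 hd)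
    have hword : wordProd (a :: L) = w := by
      rw [wordProd_cons, hL.2.1, ← mul_assoc, sB_sq, one_mul]
    refine ⟨a :: L, ⟨?_, hword, ?_⟩, ?_, by simp [hlen]⟩
    · intro c hc
      rcases List.mem_cons.1 hc with rfl | hc
      · exact han
      · exact hL.1 c hc
    · have := hL.2.2
      rw [hd, Set.ncard_sdiff_singleton_of_mem hb] at this
      have hp : 0 < (PI w).ncard := (Set.ncard_pos (PI_finite hw)).2 ⟨b, hb⟩
      simp; omega
    · funext c
      by_cases hc : c ∈ PI w
      · rw [fill_in (by rw [hword]; exact hc), hf]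
        have := (hX.1.mapsTo hc).1
        simp only; omega
      · rw [fill_out (by rw [hword]; exact hc)]
        exact (hX.2.1 c hc).symm

/-! ### Prescribed suffixes -/

def Good : List (ℕ × ℤ) → Prop
  | [] => True
  | (c, q) :: A => Good A ∧ 1 ≤ c ∧ (c : ℤ) + 1 ≤ q ∧ wordProd (A.map Prod.fst) q = c + 1 ∧
      ∀ x : ℤ, q < x → wordProd (A.map Prod.fst) x = x

def RC (X : ℤ × ℤ → ℕ) : ℕ → List (ℕ × ℤ) → Prop
  | _, [] => True
  | N, (_, q) :: A => (∃ b : ℤ × ℤ, b.2 = q ∧ X b = N + 1) ∧ RC X (N + 1) A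

theorem fill_append {n : ℕ} (P S : List ℕ) : ∀ w : Equiv.Perm ℤ, Red n w (P ++ S) →
    Red n (wordProd S) S ∧ PI (wordProd S) ⊆ PI w ∧
      ∀ c ∈ PI (wordProd S), fill (P ++ S) c = P.length + fill S c := by
  induction P with
  | nil =>
    intro w h
    have : wordProd S = w := h.2.1
    subst this
    exact ⟨h, subset_rfl, by simp⟩
  | cons a P ih =>
    intro w h
    obtain ⟨h1, h2, b, l1, l2, hadj, hb, hPI⟩ := Red.tail (L := P ++ S) h
    obtain ⟨i1, i2, i3⟩ := ih _ h1
    have hsub : PI (wordProd S) ⊆ PI w := by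
      rw [hPI]; exact i2.trans (Set.subset_insert _ _)
    refine ⟨i1, hsub, fun c hc => ?_⟩
    rw [List.cons_append, fill_cons (L := P ++ S) h c (hsub hc), i3 c hc]
    simp; omega

theorem good_label {n : ℕ} {v : Equiv.Perm ℤ} (hv : IsSignedPerm n v) {c : ℕ} {q : ℤ}
    (hc : 1 ≤ c) (hcq : (c : ℤ) + 1 ≤ q) (hq : v q = c + 1) (hfix : ∀ x, q < x → v x = x) :
    ∃ p, v p = c ∧ -q < p ∧ p < q := by
  obtain ⟨p, hp⟩ := v.surjective (c : ℤ)
  refine ⟨p, hp, ?_, ?_⟩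
  · by_contra h
    rcases eq_or_ne p (-q) with rfl | h'
    · rw [hv.1] at hp; omega
    · have := hfix (-p) (by omega)
      rw [hv.1] at this; omega
  · by_contra h
    rcases eq_or_ne p q with rfl | h'
    · omega
    · have := hfix p (by omega)
      omega

theorem good_step {n : ℕ} {v : Equiv.Perm ℤ} (hv : IsSignedPerm n v) {c : ℕ} {q : ℤ}
    (hc : 1 ≤ c) (hcq : (c : ℤ) + 1 ≤ q) (hq : v q = c + 1) (hfix : ∀ x, q < x → v x = x)
    {a : ℕ} {b : ℤ × ℤ} (l1 : -b.2 < b.1) (l2 : b.1 < b.2) (hadj : Adj v a b) (hb : b ∉ PI v) :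
    b.2 = q ↔ a = c := by
  constructor
  · intro h
    simp only [PI, Set.mem_ofPred_eq, not_and, not_lt] at hb
    have := hb l1 l2
    unfold Adj at hadj
    rw [h] at hadj this
    omega
  · rintro rfl
    obtain ⟨p, hp, h1, h2⟩ := good_label hv hc hcq hq hfix
    have := adj_unique hv l1 l2 hadj (c := (p, q)) h1 h2 (Or.inl ⟨hp, hq⟩)
    rw [this]

theorem suffix_iff {n : ℕ} {w : Equiv.Perm ℤ} {L : List ℕ} (hL : Red n w L) (A : List (ℕ × ℤ)) :
    ∀ N, Good A → L.length = N + A.length →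
      ((∃ P, L = P ++ A.map Prod.fst) ↔ RC (fill L) N A) := by
  have hBal := fill_bal L w hL
  induction A with
  | nil => intro N _ _; simp [RC]
  | cons x A ih =>
    obtain ⟨c, q⟩ := x
    rintro N ⟨g0, g1, g2, g3, g4⟩ hlen
    simp only [List.length_cons] at hlen
    have ih' := ih (N + 1) g0 (by omega)
    simp only [RC, List.map_cons, ← ih']
    -- key fact
    have key : ∀ P a, L = P ++ a :: A.map Prod.fst → ∃ b, fill L b = N + 1 ∧ b ∈ PI w ∧
        (b.2 = q ↔ a = c) := by
      rintro P a rfl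
      obtain ⟨r1, r2, r3⟩ := fill_append P _ w hL
      obtain ⟨t1, t2, b, l1, l2, hadj, hb, hPI⟩ := r1.tail
      have hbin : b ∈ PI (wordProd (a :: A.map Prod.fst)) := by rw [hPI]; simp
      refine ⟨b, ?_, r2 hbin, good_step t2 g1 g2 g3 g4 l1 l2 hadj hb⟩
      rw [r3 b hbin, fill_in hbin, (fill_bal _ _ t1).2.1 b hb]
      simp at hlen
      omega
    constructor
    · rintro ⟨P, hP⟩
      obtain ⟨b, hb1, -, hb2⟩ := key P c hP
      exact ⟨⟨b, hb2.2 rfl, hb1⟩, P ++ [c], by simp [hP]⟩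
    · rintro ⟨⟨b, hb1, hb2⟩, P, hP⟩
      have hPl : P.length = N + 1 := by
        have := congrArg List.length hP
        simp at this; omega
      rcases List.eq_nil_or_concat P with rfl | ⟨P', a, rfl⟩
      · simp at hPl
      · rw [List.concat_eq_append, List.append_assoc, List.singleton_append] at hP
        obtain ⟨b', hb1', hb2', hb3'⟩ := key P' a hP
        have hbm : b ∈ PI w := by
          by_contra h
          have := hBal.2.1 b h
          omega
        have := hBal.1.injOn hbm hb2' (by rw [hb2, hb1'])
        subst this
        rw [hb3'.1 hb1] at hP
        exact ⟨P', hP⟩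

theorem wordProd_pos (L : List ℕ) (h : ∀ a ∈ L, 1 ≤ a) (x : ℤ) (hx : 0 < x) : 0 < wordProd L x := by
  induction L with
  | nil => simpa [wordProd] using hx
  | cons a L ih =>
    have := ih fun b hb => h b (by simp [hb])
    have ha := h a (by simp)
    rw [wordProd_cons, Equiv.Perm.mul_apply, sB_apply]
    split_ifs <;> omega

theorem good_letters (A : List (ℕ × ℤ)) (hA : Good A) : ∀ x ∈ A, 1 ≤ x.1 ∧ (x.1 : ℤ) + 1 ≤ x.2 := by
  induction A with
  | nil => simp
  | cons y A ih =>
    obtain ⟨c, q⟩ := y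
    obtain ⟨g0, g1, g2, g3, g4⟩ := hA
    intro x hx
    rcases List.mem_cons.1 hx with rfl | hx
    · exact ⟨g1, g2⟩
    · exact ih g0 x hx

theorem good_PI {n r : ℕ} (A : List (ℕ × ℤ)) (hA : Good A) (hq : ∀ x ∈ A, (r : ℤ) < x.2 ∧ x.2 ≤ n) :
    Red n (wordProd (A.map Prod.fst)) (A.map Prod.fst) ∧
      ∀ b ∈ PI (wordProd (A.map Prod.fst)), 0 < b.1 ∧ b.1 < b.2 ∧ (r : ℤ) < b.2 ∧ b.2 ≤ n := by
  induction A with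
  | nil =>
    refine ⟨⟨by simp, rfl, ?_⟩, ?_⟩ <;> simp [wordProd, PI_one]
  | cons y A ih =>
    have hlet := good_letters _ hA
    obtain ⟨c, q⟩ := y
    obtain ⟨g0, g1, g2, g3, g4⟩ := hA
    have hqq := hq (c, q) (by simp)
    simp only at hqq
    obtain ⟨i1, i2⟩ := ih g0 fun x hx => hq x (by simp [hx])
    have hlt : ∀ a ∈ ((c, q) :: A).map Prod.fst, a < n := by
      intro a ha
      obtain ⟨x, hx, rfl⟩ := List.mem_map.1 ha
      have := hlet x hx
      have := hq x hx
      omega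
    have hs := wordProd_signed n _ i1.1
    obtain ⟨p, hp, h1, h2⟩ := good_label hs g1 g2 g3 g4
    have hadj : Adj (wordProd (A.map Prod.fst)) c (p, q) := Or.inl ⟨hp, g3⟩
    have hb : (p, q) ∉ PI (wordProd (A.map Prod.fst)) := by
      rintro ⟨-, -, h⟩; simp only at h; omega
    have hup := PI_up hs h1 h2 hadj hb
    have hp0 : 0 < p := by
      by_contra hp0
      rcases eq_or_ne p 0 with rfl | h'
      · rw [signed_zero hs] at hp; omega
      · have := wordProd_pos (A.map Prod.fst) (by
          intro a ha
          obtain ⟨x, hx, rfl⟩ := List.mem_map.1 ha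
          exact (hlet x (by simp [hx])).1) (-p) (by omega)
        rw [hs.1] at this; omega
    rw [List.map_cons, wordProd_cons, hup]
    refine ⟨⟨hlt, ?_, ?_⟩, ?_⟩
    · rw [← wordProd_cons]
    · rw [hup, Set.ncard_insert_of_notMem hb (PI_finite hs), ← i1.2.2]; simp
    · intro b hb'
      rcases hb' with rfl | hb'
      · exact ⟨hp0, h2, hqq⟩
      · exact i2 b hb'

theorem wordProd_reverse (L : List ℕ) : wordProd L.reverse = (wordProd L)⁻¹ := by
  induction L with
  | nil => simp [wordProd]
  | cons a L ih =>
    have h : (sB a)⁻¹ = sB a := (eq_inv_iff_mul_eq_one.2 (sB_sq a)).symm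
    rw [List.reverse_cons, wordProd_append, ih, wordProd_cons, wordProd_cons, mul_inv_rev, h]
    simp [wordProd]

theorem main_card {n r : ℕ} {w : Equiv.Perm ℤ} (hw : IsSignedPerm n w) (A : List (ℕ × ℤ))
    (hA : Good A) (hq : ∀ x ∈ A, (r : ℤ) < x.2 ∧ x.2 ≤ n)
    (hsub : ∀ p q : ℤ, 0 < p → p < q → (r : ℤ) < q → q ≤ n → (p, q) ∈ PI w) (M N : ℕ)
    (hM : (PI w).ncard = M) (hN : M = N + A.length) :
    Nat.card {L // IsReducedWord n (w * wordProd (A.map Prod.fst).reverse) L} =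
      Nat.card {X // Bal w M X ∧ RC X N A} := by
  obtain ⟨g1, g2⟩ := good_PI A hA hq
  have hv := wordProd_signed n _ g1.1
  set S := A.map Prod.fst with hS
  have hSl : S.length = A.length := by simp [hS]
  have hcard : (PI (wordProd S)).ncard = A.length := by rw [← g1.2.2, hSl]
  obtain ⟨L0, l1, l2, l3⟩ := ext_word hw N _ hv (by
    rintro ⟨p, q⟩ hb
    obtain ⟨b1, b2, b3, b4⟩ := g2 _ hb
    exact hsub p q b1 b2 b3 b4) (by omega)
  have hw' : w * wordProd S.reverse = wordProd L0 := by
    rw [wordProd_reverse, l2]; simp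
  rw [hw']
  have hs' := wordProd_signed n L0 l1
  have hc' : (PI (wordProd L0)).ncard = N := by
    apply le_antisymm
    · rw [← l3]; exact PI_word_le n L0 l1
    · obtain ⟨L1, m1, m2, m3⟩ := ext_word hs' (PI (wordProd L0)).ncard 1 (signed_one n)
        (by simp [PI_one]) (by simp [PI_one])
      have := PI_word_le n (L1 ++ S) (by
        intro a ha
        rcases List.mem_append.1 ha with h | h
        · exact m1 a h
        · exact g1.1 a h)
      rw [wordProd_append] at this
      rw [mul_one] at m2
      rw [← m2, ← l2] at this
      simp at this
      omega
  have hred : ∀ L, Red n (wordProd L0) L ↔ Red n w (L ++ S) := by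
    intro L
    constructor
    · rintro ⟨h1, h2, h3⟩
      refine ⟨?_, ?_, ?_⟩
      · intro a ha
        rcases List.mem_append.1 ha with h | h
        · exact h1 a h
        · exact g1.1 a h
      · rw [wordProd_append, h2, ← l2]
      · simp; omega
    · rintro ⟨h1, h2, h3⟩
      refine ⟨fun a ha => h1 a (by simp [ha]), ?_, ?_⟩
      · rw [wordProd_append, l2] at h2
        exact mul_right_cancel h2
      · simp at h3; omega
  let F : {L // IsReducedWord n (wordProd L0) L} → {X // Bal w M X ∧ RC X N A} := fun L =>
    ⟨fill (L.1 ++ S), by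
      have hR := (hred _).1 ((isReducedWord_iff hs' _).1 L.2)
      have hB := fill_bal _ _ hR
      rw [hR.2.2, hM] at hB
      exact ⟨hB, (suffix_iff hR A N hA (by rw [hR.2.2, hM, hN])).1 ⟨L.1, rfl⟩⟩⟩
  apply Nat.card_congr
  apply Equiv.ofBijective F
  constructor
  · rintro ⟨L, hL⟩ ⟨K, hK⟩ h
    have hR := (hred _).1 ((isReducedWord_iff hs' _).1 hL)
    have hR' := (hred _).1 ((isReducedWord_iff hs' _).1 hK)
    have := fill_inj _ _ _ hR hR' (congrArg Subtype.val h)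
    exact Subtype.ext (List.append_cancel_right this)
  · rintro ⟨X, hX, hRC⟩
    obtain ⟨L, hL, rfl, hlen⟩ := fill_surj M w X hw hX
    obtain ⟨P, hP⟩ := (suffix_iff hL A N hA (by omega)).2 hRC
    rw [← hS] at hP
    subst hP
    exact ⟨⟨P, (isReducedWord_iff hs' _).2 ((hred _).2 hL)⟩, rfl⟩

/-! ### The word `a^λ` -/

def runP (q j : ℕ) : List (ℕ × ℤ) := (List.range j).map fun t => (q - j + t, (q : ℤ))

theorem runP_succ (q j : ℕ) (h : j + 1 ≤ q) : runP q (j + 1) = (q - (j + 1), (q : ℤ)) :: runP q j := by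
  unfold runP
  rw [List.range_succ_eq_map]
  simp only [List.map_cons, List.map_map]
  congr 1
  apply List.map_congr_left
  intro t _
  simp; omega

theorem good_run (q : ℕ) (A : List (ℕ × ℤ)) (hA : Good A)
    (hfix : ∀ x : ℤ, (q : ℤ) ≤ x → wordProd (A.map Prod.fst) x = x) (j : ℕ) (hj : j + 1 ≤ q) :
    Good (runP q j ++ A) ∧ wordProd ((runP q j ++ A).map Prod.fst) q = (q : ℤ) - j ∧
      ∀ x : ℤ, (q : ℤ) < x → wordProd ((runP q j ++ A).map Prod.fst) x = x := by
  induction j with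
  | zero =>
    refine ⟨by simpa [runP] using hA, ?_, fun x hx => ?_⟩
    · simpa [runP] using hfix q le_rfl
    · simpa [runP] using hfix x hx.le
  | succ j ih =>
    obtain ⟨i1, i2, i3⟩ := ih (by omega)
    rw [runP_succ q j (by omega), List.cons_append]
    refine ⟨⟨i1, by omega, by omega, by rw [i2]; omega, i3⟩, ?_, fun x hx => ?_⟩
    · rw [List.map_cons, wordProd_cons, Equiv.Perm.mul_apply, i2, sB_apply]
      split_ifs <;> push_cast <;> omega
    · rw [List.map_cons, wordProd_cons, Equiv.Perm.mul_apply, i3 x hx, sB_apply]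
      split_ifs <;> simp only at * <;> omega

def aPairs (d r : ℕ) (lam : ℕ → ℕ) (s m : ℕ) : List (ℕ × ℤ) :=
  (List.range' s m).flatMap fun k => runP (d + r - k) (muF d r lam (k + 1))

theorem aPairs_succ (d r : ℕ) (lam : ℕ → ℕ) (s m : ℕ) :
    aPairs d r lam s (m + 1) = runP (d + r - s) (muF d r lam (s + 1)) ++ aPairs d r lam (s + 1) m := by
  simp [aPairs, List.range'_succ]

theorem aPairs_good (d r : ℕ) (lam : ℕ → ℕ) (hmu : ∀ k, k < d → muF d r lam (k + 1) + 1 ≤ d + r - k)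
    (m : ℕ) : ∀ s, s + m = d → Good (aPairs d r lam s m) ∧
      ∀ x : ℤ, ((d + r - s : ℕ) : ℤ) < x → wordProd ((aPairs d r lam s m).map Prod.fst) x = x := by
  induction m with
  | zero => intro s _; simp [aPairs, Good, wordProd]
  | succ m ih =>
    intro s hs
    obtain ⟨i1, i2⟩ := ih (s + 1) (by omega)
    rw [aPairs_succ]
    have := good_run (d + r - s) _ i1 (fun x hx => i2 x (by omega)) _ (hmu s (by omega))
    exact ⟨this.1, this.2.2⟩

theorem aPairs_q (d r : ℕ) (lam : ℕ → ℕ) (s m : ℕ) (h : s + m = d) :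
    ∀ x ∈ aPairs d r lam s m, (r : ℤ) < x.2 ∧ x.2 ≤ ((d + r : ℕ) : ℤ) := by
  intro x hx
  simp only [aPairs, runP, List.mem_flatMap, List.mem_range'_1, List.mem_map] at hx
  obtain ⟨k, hk, t, _, rfl⟩ := hx
  simp only
  omega

theorem sigmaF_succ (d r : ℕ) (lam : ℕ → ℕ) (s : ℕ) :
    sigmaF d r lam (s + 1) = sigmaF d r lam s + muF d r lam (s + 1) := by
  unfold sigmaF
  rw [Finset.sum_Icc_succ_top (by omega)]

theorem aPairs_length (d r : ℕ) (lam : ℕ → ℕ) (m : ℕ) : ∀ s,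
    sigmaF d r lam s + (aPairs d r lam s m).length = sigmaF d r lam (s + m) := by
  induction m with
  | zero => intro s; simp [aPairs]
  | succ m ih =>
    intro s
    rw [aPairs_succ, List.length_append]
    have := ih (s + 1)
    rw [sigmaF_succ] at this
    rw [show s + (m + 1) = s + 1 + m by ring, ← this]
    simp [runP]; omega

theorem aPairs_word (d r : ℕ) (lam : ℕ → ℕ) (hmu : ∀ k, k < d → muF d r lam (k + 1) + 1 ≤ d + r - k) :
    (aPairs d r lam 0 d).map Prod.fst = aLamWord d r lam := by
  unfold aPairs aLamWord
  rw [List.map_flatMap, ← List.range_eq_range']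
  apply List.flatMap_congr
  intro k hk
  have := hmu k (by simpa using hk)
  unfold runP
  rw [List.map_map]
  apply List.map_congr_left
  intro t _
  simp; omega

theorem RC_run (X : ℤ × ℤ → ℕ) (q : ℕ) (A : List (ℕ × ℤ)) (j : ℕ) (hj : j ≤ q) : ∀ N,
    (RC X N (runP q j ++ A) ↔ (∀ k, N + 1 ≤ k → k ≤ N + j → ∃ b : ℤ × ℤ, b.2 = q ∧ X b = k) ∧
      RC X (N + j) A) := by
  induction j with
  | zero =>
    intro N
    simp only [runP, List.range_zero, List.map_nil, List.nil_append, add_zero]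
    constructor
    · intro h; exact ⟨fun k h1 h2 => by omega, h⟩
    · exact fun h => h.2
  | succ j ih =>
    intro N
    rw [runP_succ q j hj, List.cons_append]
    simp only [RC]
    rw [ih (by omega) (N + 1), show N + 1 + j = N + (j + 1) by ring]
    constructor
    · rintro ⟨h1, h2, h3⟩
      refine ⟨fun k k1 k2 => ?_, h3⟩
      rcases Nat.lt_or_ge (N + 1) k with h | h
      · exact h2 k (by omega) (by omega)
      · obtain rfl : k = N + 1 := by omega
        exact h1
    · rintro ⟨h1, h2⟩
      exact ⟨h1 (N + 1) (by omega) (by omega), fun k k1 k2 => h1 k (by omega) (by omega), h2⟩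

theorem RC_aPairs (d r : ℕ) (lam : ℕ → ℕ) (hmu : ∀ k, k < d → muF d r lam (k + 1) + 1 ≤ d + r - k)
    (X : ℤ × ℤ → ℕ) (N : ℕ) (m : ℕ) : ∀ s, s + m = d →
    (RC X (N + sigmaF d r lam s) (aPairs d r lam s m) ↔
      ∀ i, s + 1 ≤ i → i ≤ d → ∀ k, N + sigmaF d r lam (i - 1) + 1 ≤ k → k ≤ N + sigmaF d r lam i →
        ∃ b : ℤ × ℤ, b.2 = (d : ℤ) + r + 1 - i ∧ X b = k) := by
  induction m with
  | zero =>
    intro s hs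
    simp only [aPairs, List.range'_zero, List.flatMap_nil, RC, true_iff]
    intro i h1 h2; omega
  | succ m ih =>
    intro s hs
    rw [aPairs_succ, RC_run _ _ _ _ (by have := hmu s (by omega); omega), show N + sigmaF d r lam s + muF d r lam (s + 1) = N + sigmaF d r lam (s + 1) by
        rw [sigmaF_succ]; ring,
      ih (s + 1) (by omega)]
    have hq : ((d + r - s : ℕ) : ℤ) = (d : ℤ) + r + 1 - (s + 1 : ℕ) := by push_cast; omega
    rw [hq]
    constructor
    · rintro ⟨h1, h2⟩ i hi hi'
      rcases Nat.lt_or_ge (s + 1) i with h | h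
      · exact h2 i (by omega) hi'
      · obtain rfl : i = s + 1 := by omega
        simpa using h1
    · intro h
      exact ⟨by simpa using h (s + 1) le_rfl (by omega), fun i h1 h2 => h i (by omega) h2⟩

/-! ### Translation of the diagram -/

def phi (d r : ℕ) (b : ℤ × ℤ) : ℤ × ℤ := (if 0 ≤ b.2 then b.2 else b.2 - r, (d : ℤ) + r + 1 - b.1)

theorem mem_diag (d r : ℕ) (b : ℤ × ℤ) : b ∈ Diagram d (Zlam d r) ↔
    1 ≤ b.1 ∧ b.1 ≤ d ∧ b.1 - d ≤ b.2 ∧ b.2 ≤ r + d - b.1 := by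
  simp only [Diagram, Zlam, Set.mem_ofPred_eq]
  omega

theorem mem_PI_w {d r : ℕ} {w : Equiv.Perm ℤ} (hw : IsWdr d r w) (p q : ℤ) :
    (p, q) ∈ PI w ↔ -q < p ∧ p < q ∧ r < q ∧ q ≤ d + r ∧ (0 ≤ p ∨ p < -r) := by
  obtain ⟨hs, h1, h2⟩ := hw
  have h0 := signed_zero hs
  constructor
  · intro hm
    have hle := PI_le hs hm
    obtain ⟨l1, l2, l3⟩ := hm
    simp only at l1 l2 l3
    push_cast at hle
    have hval : ∀ x : ℤ, 0 < x → x ≤ r → w x = d + x := fun x hx hx' => h1 x (by omega) hx'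
    have hneg : w p = - w (-p) := by rw [hs.1]; ring
    refine ⟨l1, l2, ?_, hle, ?_⟩
    · by_contra hq
      have e := hval q (by omega) (by omega)
      rcases lt_trichotomy p 0 with h | h | h
      · have := hval (-p) (by omega) (by omega); omega
      · subst h; omega
      · have := hval p h (by omega); omega
    · by_contra hp
      have e := hval (-p) (by omega) (by omega)
      rcases le_or_gt q r with h | h
      · have := hval q (by omega) h; omega
      · have := h2 q h hle; omega
  · rintro ⟨l1, l2, l3, l4, l5⟩
    refine ⟨l1, l2, ?_⟩
    simp only
    have e := h2 q l3 (by omega)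
    have hneg : w p = - w (-p) := by rw [hs.1]; ring
    rcases lt_trichotomy p 0 with h | h | h
    · have := h2 (-p) (by omega) (by omega); omega
    · subst h; omega
    · rcases le_or_gt p r with h' | h'
      · have := h1 p (by omega) h'; omega
      · have := h2 p h' (by omega); omega

theorem phi_mem {d r : ℕ} {w : Equiv.Perm ℤ} (hw : IsWdr d r w) (b : ℤ × ℤ) :
    phi d r b ∈ PI w ↔ b ∈ Diagram d (Zlam d r) := by
  rw [mem_diag]
  unfold phi
  rw [mem_PI_w hw]
  split_ifs <;> omega

theorem phi_inj (d r : ℕ) : Function.Injective (phi d r) := by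
  rintro ⟨i, c⟩ ⟨i', c'⟩ h
  simp only [phi, Prod.mk.injEq] at h
  obtain ⟨h1, h2⟩ := h
  ext
  · simp; omega
  · simp; split_ifs at h1 <;> omega

theorem phi_surj {d r : ℕ} {w : Equiv.Perm ℤ} (hw : IsWdr d r w) (b : ℤ × ℤ) (hb : b ∈ PI w) :
    ∃ c, phi d r c = b := by
  obtain ⟨p, q⟩ := b
  rw [mem_PI_w hw] at hb
  refine ⟨((d : ℤ) + r + 1 - q, if 0 ≤ p then p else p + r), ?_⟩
  unfold phi
  ext
  · simp only; split_ifs <;> omega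
  · simp

theorem phi_bij {d r : ℕ} {w : Equiv.Perm ℤ} (hw : IsWdr d r w) :
    Set.BijOn (phi d r) (Diagram d (Zlam d r)) (PI w) := by
  refine ⟨fun b hb => (phi_mem hw b).2 hb, (phi_inj d r).injOn, fun b hb => ?_⟩
  obtain ⟨c, rfl⟩ := phi_surj hw b hb
  exact ⟨c, (phi_mem hw c).1 hb, rfl⟩

theorem diag_card (d : ℕ) (lam : ℕ → ℕ) : (Diagram d lam).ncard = sizeP d lam := by
  have : Diagram d lam = (fun x : (Σ _ : ℕ, ℤ) => ((x.1 : ℤ), x.2)) ''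
      (((Finset.Icc 1 d).sigma fun i => Finset.Ico ((i : ℤ) - d) (lam i + i - d)) : Finset (Σ _ : ℕ, ℤ)) := by
    ext ⟨i, c⟩
    simp only [Diagram, Set.mem_ofPred_eq, Set.mem_image, Finset.mem_coe, Finset.mem_sigma,
      Finset.mem_Icc, Finset.mem_Ico, Prod.mk.injEq]
    constructor
    · rintro ⟨h1, h2, h3, h4⟩
      exact ⟨⟨i.toNat, c⟩, by simp only; omega, by simp only; omega, rfl⟩
    · rintro ⟨⟨j, e⟩, h, rfl, rfl⟩
      simp only [Int.toNat_natCast] at *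
      omega
  rw [this, Set.ncard_image_of_injective, Set.ncard_coe_finset, Finset.card_sigma]
  · unfold sizeP
    apply Finset.sum_congr rfl
    intro i _
    rw [Int.card_Ico]; omega
  · rintro ⟨i, c⟩ ⟨i', c'⟩ h
    simp only [Prod.mk.injEq, Nat.cast_inj] at h
    obtain ⟨rfl, rfl⟩ := h
    rfl

theorem mem_hook (d r : ℕ) (i c : ℤ) (b : ℤ × ℤ) : b ∈ ExtHook d (Zlam d r) i c ↔
    (b.1 = i ∧ b.2 = c) ∨ ((1 ≤ b.1 ∧ b.1 ≤ d ∧ b.1 - d ≤ b.2 ∧ b.2 ≤ r + d - b.1) ∧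
      ((b.1 = i ∧ c < b.2) ∨ (b.2 = c ∧ i < b.1) ∨ (c < 0 ∧ b.1 = d + 1 + c))) ∨
      (c < 0 ∧ b.1 = d + 1 + c ∧ b.2 = c) := by
  simp only [ExtHook, Hook, Set.mem_union, Set.mem_singleton_iff, Set.mem_ofPred_eq, mem_diag]
  rw [Prod.ext_iff, Prod.ext_iff]
  tauto

theorem extF_neg (d r : ℕ) (X : ℤ × ℤ → ℕ) (b1 b2 : ℤ) (h : ¬ b2 = b1 - (d + 1)) :
    ExtFilling d (X ∘ phi d r) (b1, b2) = X (phi d r (b1, b2)) := by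
  unfold ExtFilling
  simp [h]

theorem extF_pos (d r : ℕ) (X : ℤ × ℤ → ℕ) (b1 b2 : ℤ) (h : b2 = b1 - (d + 1)) :
    ExtFilling d (X ∘ phi d r) (b1, b2) = X (phi d r (b1, 0)) := by
  unfold ExtFilling
  simp [h]

set_option maxHeartbeats 2000000 in
theorem hook_count {d r : ℕ} {w : Equiv.Perm ℤ} (hw : IsWdr d r w) {X : ℤ × ℤ → ℕ}
    (hX : ∀ b, b ∉ PI w → X b = 0) (a : ℤ × ℤ) (ha : a ∈ Diagram d (Zlam d r)) :
    {b ∈ ExtHook d (Zlam d r) a.1 a.2 | X (phi d r a) < ExtFilling d (X ∘ phi d r) b}.ncard =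
      cntF X (phi d r a).1 (phi d r a).2 := by
  obtain ⟨i, c⟩ := a
  rw [mem_diag] at ha
  simp only at ha
  have hpos : ∀ b V, V < X b → b ∈ PI w := by
    intro b V h
    by_contra hb
    rw [hX b hb] at h; omega
  obtain ⟨x, hx⟩ : ∃ x, x = (phi d r (i, c)).1 := ⟨_, rfl⟩
  obtain ⟨q, hq⟩ : ∃ q, q = (phi d r (i, c)).2 := ⟨_, rfl⟩
  have hxq : phi d r (i, c) = (x, q) := by rw [hx, hq]
  have hq' : q = (d : ℤ) + r + 1 - i := hq
  have hx' : (0 ≤ c ∧ x = c) ∨ (c < 0 ∧ x = c - r) := by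
    rw [hx]; simp only [phi]; split_ifs <;> omega
  rw [hxq]
  clear hx hq
  simp only
  have hself : nrm x q = (x, q) := nrm_self (by omega)
  unfold cntF
  rw [hself, Finset.sum_add_distrib, ← Finset.card_filter, ← Finset.card_filter]
  have hF2 : ∀ k, k ∈ Finset.Ioo x q → X (x, q) < X (nrm k q) →
      nrm k q = (k, q) ∧ (0 ≤ k ∨ k < -r) := by
    intro k hk hlt
    rw [Finset.mem_Ioo] at hk
    have e : nrm k q = (k, q) := nrm_self (by omega)
    rw [e] at hlt
    have := hpos _ _ hlt
    rw [mem_PI_w hw] at this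
    exact ⟨e, this.2.2.2.2⟩
  have hF1 : ∀ k, k ∈ Finset.Ioo x q → X (x, q) < X (nrm x k) →
      (-x < k ∧ nrm x k = (x, k) ∧ r < k) ∨
      (k < -x ∧ nrm x k = (-k, -x) ∧ c < 0 ∧ (k ≤ 0 ∨ r < k)) ∨
      (k = -x ∧ nrm x k = (0, -x) ∧ c < 0) := by
    intro k hk hlt
    rw [Finset.mem_Ioo] at hk
    rcases lt_trichotomy (-x) k with h | h | h
    · have e : nrm x k = (x, k) := by unfold nrm; rw [if_pos h]
      rw [e] at hlt
      have := hpos _ _ hlt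
      rw [mem_PI_w hw] at this
      exact Or.inl ⟨h, e, this.2.2.1⟩
    · subst h
      have e : nrm x (-x) = (0, -x) := by unfold nrm; simp
      exact Or.inr (Or.inr ⟨rfl, e, by omega⟩)
    · have e : nrm x k = (-k, -x) := by unfold nrm; rw [if_neg (by omega), if_pos h]
      rw [e] at hlt
      have := hpos _ _ hlt
      rw [mem_PI_w hw] at this
      exact Or.inr (Or.inl ⟨h, e, by omega, by omega⟩)
  let g1 : ℤ → ℤ × ℤ := fun k => (i, if 0 ≤ k then k else k + r)
  let g2 : ℤ → ℤ × ℤ := fun k => if -x < k then ((d : ℤ) + r + 1 - k, c) else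
    if k < -x then ((d : ℤ) + 1 + c, if 0 ≤ -k then -k else -k + r) else ((d : ℤ) + 1 + c, c)
  set F1 := Finset.filter (fun k => X (x, q) < X (nrm x k)) (Finset.Ioo x q) with hF1d
  set F2 := Finset.filter (fun k => X (x, q) < X (nrm k q)) (Finset.Ioo x q) with hF2d
  have hS : {b ∈ ExtHook d (Zlam d r) i c | X (x, q) < ExtFilling d (X ∘ phi d r) b} =
      ((F1.image g2 ∪ F2.image g1 : Finset (ℤ × ℤ)) : Set (ℤ × ℤ)) := by
    ext b
    rw [Finset.mem_coe, Finset.mem_union, Finset.mem_image, Finset.mem_image, Set.mem_ofPred_eq]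
    constructor
    · rintro ⟨hb, hlt⟩
      obtain ⟨b1, b2⟩ := b
      rw [mem_hook] at hb
      simp only at hb
      unfold ExtFilling at hlt
      simp only [Function.comp] at hlt
      by_cases hbi : b1 = i
      · subst hbi
        right
        rw [if_neg (by omega)] at hlt
        have hp : phi d r (b1, b2) = ((phi d r (b1, b2)).1, q) := by
          rw [hq']; rfl
        have hk : (0 ≤ b2 ∧ (phi d r (b1, b2)).1 = b2) ∨ (b2 < 0 ∧ (phi d r (b1, b2)).1 = b2 - r) := by
          simp only [phi]; split_ifs <;> omega
        generalize (phi d r (b1, b2)).1 = k at hp hk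
        rw [hp] at hlt
        have hne : k ≠ x := by rintro rfl; omega
        have hin := hpos _ _ hlt
        rw [mem_PI_w hw] at hin
        refine ⟨k, ?_, ?_⟩
        · rw [hF2d, Finset.mem_filter, Finset.mem_Ioo, nrm_self (by omega)]
          exact ⟨by omega, hlt⟩
        · simp only [g1, Prod.mk.injEq, true_and]
          split_ifs <;> omega
      · left
        by_cases hext : b2 = b1 - (d + 1)
        · rw [if_pos hext] at hlt
          have hc : c < 0 ∧ b1 = d + 1 + c ∧ b2 = c := by omega
          refine ⟨-x, ?_, ?_⟩
          · rw [hF1d, Finset.mem_filter, Finset.mem_Ioo]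
            refine ⟨by omega, ?_⟩
            have e : nrm x (-x) = (0, -x) := by unfold nrm; simp
            have e2 : phi d r (b1, 0) = (0, -x) := by
              unfold phi; simp; omega
            rw [e, ← e2]; exact hlt
          · simp only [g2]
            rw [if_neg (by omega), if_neg (by omega)]
            ext <;> simp <;> omega
        · rw [if_neg hext] at hlt
          by_cases hrow : c < 0 ∧ b1 = d + 1 + c
          · have hp : phi d r (b1, b2) = ((phi d r (b1, b2)).1, -x) := by
              ext
              · rfl
              · simp only [phi]; omega
            have hk : (0 ≤ b2 ∧ (phi d r (b1, b2)).1 = b2) ∨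
                (b2 < 0 ∧ (phi d r (b1, b2)).1 = b2 - r) := by
              simp only [phi]; split_ifs <;> omega
            generalize (phi d r (b1, b2)).1 = k at hp hk
            rw [hp] at hlt
            have hin := hpos _ _ hlt
            rw [mem_PI_w hw] at hin
            refine ⟨-k, ?_, ?_⟩
            · rw [hF1d, Finset.mem_filter, Finset.mem_Ioo]
              have e : nrm x (-k) = (k, -x) := by
                unfold nrm; rw [if_neg (by omega), if_pos (by omega)]; simp
              rw [e]
              exact ⟨by omega, hlt⟩
            · simp only [g2]
              rw [if_neg (by omega), if_pos (by omega)]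
              ext
              · simp; omega
              · simp only [neg_neg]; split_ifs <;> omega
          · have hbc : b2 = c ∧ i < b1 := by omega
            have hp : phi d r (b1, b2) = (x, (d : ℤ) + r + 1 - b1) := by
              ext
              · simp only [phi]; split_ifs <;> omega
              · rfl
            rw [hp] at hlt
            have hin := hpos _ _ hlt
            rw [mem_PI_w hw] at hin
            refine ⟨(d : ℤ) + r + 1 - b1, ?_, ?_⟩
            · rw [hF1d, Finset.mem_filter, Finset.mem_Ioo, nrm_self (by omega)]
              exact ⟨by omega, hlt⟩
            · simp only [g2]
              rw [if_pos (by omega)]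
              ext <;> simp <;> omega
    · rintro (⟨k, hk, rfl⟩ | ⟨k, hk, rfl⟩)
      · rw [hF1d, Finset.mem_filter] at hk
        obtain ⟨hk, hlt⟩ := hk
        have h := hF1 k hk hlt
        rw [Finset.mem_Ioo] at hk
        rcases h with ⟨h1, h2, h3⟩ | ⟨h1, h2, h3, h4⟩ | ⟨h1, h2, h3⟩
        · have e : g2 k = ((d : ℤ) + r + 1 - k, c) := by simp only [g2]; rw [if_pos h1]
          rw [e, mem_hook]
          refine ⟨Or.inr (Or.inl ⟨⟨by simp only; omega, by simp only; omega, by simp only; omega, by simp only; omega⟩, Or.inr (Or.inl ⟨rfl, by simp only; omega⟩)⟩), ?_⟩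
          rw [extF_neg _ _ _ _ _ (by omega)]
          have e2 : phi d r ((d : ℤ) + r + 1 - k, c) = nrm x k := by
            rw [h2]
            ext
            · simp only [phi]; split_ifs <;> omega
            · simp [phi]
          rw [e2]; exact hlt
        · have e : g2 k = ((d : ℤ) + 1 + c, if 0 ≤ -k then -k else -k + r) := by
            simp only [g2]; rw [if_neg (by omega), if_pos h1]
          obtain ⟨j, hj⟩ : ∃ j : ℤ, j = if 0 ≤ -k then -k else -k + r := ⟨_, rfl⟩
          have hj' : (0 ≤ -k ∧ j = -k) ∨ (-k < 0 ∧ j = -k + r) := by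
            rw [hj]; split_ifs <;> omega
          rw [e, mem_hook, ← hj]
          refine ⟨Or.inr (Or.inl ⟨⟨by simp only; omega, by simp only; omega, by simp only; omega, by simp only; omega⟩, Or.inr (Or.inr ⟨h3, rfl⟩)⟩), ?_⟩
          rw [extF_neg _ _ _ _ _ (by omega)]
          have e2 : phi d r ((d : ℤ) + 1 + c, j) = nrm x k := by
            rw [h2]
            ext
            · simp only [phi]; split_ifs <;> omega
            · simp only [phi]; omega
          rw [e2]; exact hlt
        · have e : g2 k = ((d : ℤ) + 1 + c, c) := by
            simp only [g2]; rw [if_neg (by omega), if_neg (by omega)]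
          rw [e, mem_hook]
          refine ⟨Or.inr (Or.inr ⟨h3, rfl, rfl⟩), ?_⟩
          rw [extF_pos _ _ _ _ _ (by omega)]
          have e2 : phi d r ((d : ℤ) + 1 + c, 0) = nrm x k := by
            rw [h2]
            ext
            · simp [phi]
            · simp only [phi]; omega
          rw [e2]; exact hlt
      · rw [hF2d, Finset.mem_filter] at hk
        obtain ⟨hk, hlt⟩ := hk
        obtain ⟨h1, h2⟩ := hF2 k hk hlt
        rw [Finset.mem_Ioo] at hk
        obtain ⟨j, hj⟩ : ∃ j : ℤ, j = if 0 ≤ k then k else k + r := ⟨_, rfl⟩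
        have hj' : (0 ≤ k ∧ j = k) ∨ (k < 0 ∧ j = k + r) := by
          rw [hj]; split_ifs <;> omega
        have e : g1 k = (i, j) := by simp only [g1]; rw [← hj]
        rw [e, mem_hook]
        refine ⟨Or.inr (Or.inl ⟨⟨by simp only; omega, by simp only; omega, by simp only; omega, by simp only; omega⟩, Or.inl ⟨rfl, by simp only; omega⟩⟩), ?_⟩
        rw [extF_neg _ _ _ _ _ (by omega)]
        have e2 : phi d r (i, j) = nrm k q := by
          rw [h1]
          ext
          · simp only [phi]; split_ifs <;> omega
          · simp only [phi]; omega
        rw [e2]; exact hlt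
  have hv : ∀ k, k ∈ Finset.Ioo x q → X (x, q) < X (nrm x k) →
      (-x < k ∧ r < k ∧ (g2 k).1 = (d : ℤ) + r + 1 - k ∧ (g2 k).2 = c) ∨
      (k < -x ∧ c < 0 ∧ (g2 k).1 = (d : ℤ) + 1 + c ∧
        ((k ≤ 0 ∧ (g2 k).2 = -k) ∨ (r < k ∧ (g2 k).2 = -k + r))) ∨
      (k = -x ∧ c < 0 ∧ (g2 k).1 = (d : ℤ) + 1 + c ∧ (g2 k).2 = c) := by
    intro k hk hlt
    rcases hF1 k hk hlt with ⟨h1, h2, h3⟩ | ⟨h1, h2, h3, h4⟩ | ⟨h1, h2, h3⟩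
    · left
      have e : g2 k = ((d : ℤ) + r + 1 - k, c) := by simp only [g2]; rw [if_pos h1]
      rw [e]; exact ⟨h1, h3, rfl, rfl⟩
    · right; left
      have e : g2 k = ((d : ℤ) + 1 + c, if 0 ≤ -k then -k else -k + r) := by
        simp only [g2]; rw [if_neg (by omega), if_pos h1]
      rw [e]
      refine ⟨h1, h3, rfl, ?_⟩
      rcases h4 with h4 | h4
      · exact Or.inl ⟨h4, if_pos (by omega)⟩
      · exact Or.inr ⟨h4, if_neg (by omega)⟩
    · right; right
      have e : g2 k = ((d : ℤ) + 1 + c, c) := by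
        simp only [g2]; rw [if_neg (by omega), if_neg (by omega)]
      rw [e]; exact ⟨h1, h3, rfl, rfl⟩
  rw [hS, Set.ncard_coe_finset, Finset.card_union_of_disjoint, Finset.card_image_of_injOn,
    Finset.card_image_of_injOn]
  · intro k hk k' hk' he
    rw [Finset.mem_coe, hF2d, Finset.mem_filter] at hk hk'
    have h1 := (hF2 k hk.1 hk.2).2
    have h2 := (hF2 k' hk'.1 hk'.2).2
    simp only [g1, Prod.mk.injEq, true_and] at he
    split_ifs at he <;> omega
  · intro k hk k' hk' he
    rw [Finset.mem_coe, hF1d, Finset.mem_filter] at hk hk'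
    have h1 := hv k hk.1 hk.2
    have h2 := hv k' hk'.1 hk'.2
    rw [← he] at h2
    have a1 := Finset.mem_Ioo.1 hk.1
    have a2 := Finset.mem_Ioo.1 hk'.1
    generalize g2 k = z at h1 h2
    clear hk hk' hS he hv hF1 hF2
    clear_value F1 F2 g1 g2
    clear hF1d hF2d
    rcases h1 with h1 | h1 | h1 <;> rcases h2 with h2 | h2 | h2 <;> omega
  · rw [Finset.disjoint_left]
    intro b hb hb'
    rw [Finset.mem_image] at hb hb'
    obtain ⟨k, hk, rfl⟩ := hb
    obtain ⟨k', hk', he⟩ := hb'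
    rw [hF1d, Finset.mem_filter] at hk
    have h1 := hv k hk.1 hk.2
    have a1 := Finset.mem_Ioo.1 hk.1
    have he' : i = (g2 k).1 := congrArg Prod.fst he
    clear hk hS he hv hF1 hF2 hk'
    rcases h1 with h1 | h1 | h1 <;> omega
theorem strict_lower {d : ℕ} {lam : ℕ → ℕ} (h : IsStrictPartition d lam) (m : ℕ) :
    m < d → m + 1 ≤ lam (d - m) := by
  induction m with
  | zero => intro _; exact h.2
  | succ m ih =>
    intro hm
    have h1 := ih (by omega)
    have h2 := h.1 (d - (m + 1)) (by omega) (by omega)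
    rw [show d - (m + 1) + 1 = d - m by omega] at h2
    omega

theorem mu_bound {d r : ℕ} {lam : ℕ → ℕ} (h : IsStrictPartition d lam) :
    ∀ k, k < d → muF d r lam (k + 1) + 1 ≤ d + r - k := by
  intro k hk
  have := strict_lower h (d - (k + 1)) (by omega)
  rw [show d - (d - (k + 1)) = k + 1 by omega] at this
  unfold muF
  omega

theorem size_sigma {d r : ℕ} {lam : ℕ → ℕ} (hsub : ∀ i : ℕ, 1 ≤ i → i ≤ d → lam i ≤ Zlam d r i) :
    sizeP d (Zlam d r) = sizeP d lam + sigmaF d r lam d := by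
  unfold sizeP sigmaF
  rw [← Finset.sum_add_distrib]
  apply Finset.sum_congr rfl
  intro i hi
  rw [Finset.mem_Icc] at hi
  have := hsub i hi.1 hi.2
  unfold muF
  unfold Zlam at *
  omega

theorem PI_card {d r : ℕ} {w : Equiv.Perm ℤ} (hw : IsWdr d r w) :
    (PI w).ncard = sizeP d (Zlam d r) := by
  rw [← (phi_bij hw).image_eq, Set.ncard_image_of_injective _ (phi_inj d r), diag_card]

theorem rk_phi (d r : ℕ) (a : ℤ × ℤ) (ha : a ∈ Diagram d (Zlam d r)) :
    rk d (Zlam d r) a.1 a.2 - 1 = (phi d r a).2 - (phi d r a).1 - 1 := by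
  rw [mem_diag] at ha
  unfold rk phi Zlam
  simp only
  split_ifs <;> omega

theorem bal_iff {d r : ℕ} {w : Equiv.Perm ℤ} (hw : IsWdr d r w) {X : ℤ × ℤ → ℕ}
    (hX : ∀ b, b ∉ PI w → X b = 0) :
    IsBalanced d (Zlam d r) (X ∘ phi d r) ↔ Bal w (sizeP d (Zlam d r)) X := by
  unfold IsBalanced IsFilling Bal
  have hb := phi_bij hw
  constructor
  · rintro ⟨⟨h1, h2⟩, h3⟩
    refine ⟨⟨?_, ?_, ?_⟩, hX, ?_⟩
    · intro b hbm
      obtain ⟨c, hc, rfl⟩ := hb.2.2 hbm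
      exact h1.1 hc
    · intro b hbm b' hbm' he
      obtain ⟨c, hc, rfl⟩ := hb.2.2 hbm
      obtain ⟨c', hc', rfl⟩ := hb.2.2 hbm'
      rw [h1.2.1 hc hc' he]
    · intro k hk
      obtain ⟨c, hc, rfl⟩ := h1.2.2 hk
      exact ⟨phi d r c, hb.1 hc, rfl⟩
    · intro b hbm
      obtain ⟨c, hc, rfl⟩ := hb.2.2 hbm
      have := h3 c hc
      rw [rk_phi d r c hc] at this
      rw [← this, ← hook_count hw hX c hc]
      rfl
  · rintro ⟨h1, -, h3⟩
    refine ⟨⟨h1.comp hb, ?_⟩, ?_⟩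
    · intro p hp
      exact hX _ (fun h => hp ((phi_mem hw p).1 h))
    · intro p hp
      rw [rk_phi d r p hp, ← h3 _ (hb.1 hp), ← hook_count hw hX p hp]
      rfl

theorem row_iff {d r : ℕ} {w : Equiv.Perm ℤ} (hw : IsWdr d r w) {X : ℤ × ℤ → ℕ}
    (hX : ∀ b, b ∉ PI w → X b = 0) (i k : ℕ) (hk : 1 ≤ k) :
    (∃ c : ℤ, ((i : ℤ), c) ∈ Diagram d (Zlam d r) ∧ (X ∘ phi d r) ((i : ℤ), c) = k) ↔
      ∃ b : ℤ × ℤ, b.2 = (d : ℤ) + r + 1 - i ∧ X b = k := by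
  constructor
  · rintro ⟨c, _, hc⟩
    exact ⟨phi d r (i, c), rfl, hc⟩
  · rintro ⟨b, hb, hbk⟩
    have hm : b ∈ PI w := by
      by_contra h
      rw [hX b h] at hbk; omega
    obtain ⟨⟨j, c⟩, hc, rfl⟩ := (phi_bij hw).2.2 hm
    have : j = i := by
      simp only [phi] at hb; omega
    subst this
    exact ⟨c, hc, hbk⟩

theorem restr_iff {d r : ℕ} {w : Equiv.Perm ℤ} (hw : IsWdr d r w) {lam : ℕ → ℕ}
    (hlam : IsStrictPartition d lam) {X : ℤ × ℤ → ℕ} (hX : ∀ b, b ∉ PI w → X b = 0) :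
    X ∘ phi d r ∈ BSRestricted d r lam ↔ Bal w (sizeP d (Zlam d r)) X ∧
      RC X (sizeP d lam) (aPairs d r lam 0 d) := by
  have h := RC_aPairs d r lam (mu_bound hlam) X (sizeP d lam) d 0 (by omega)
  rw [show sizeP d lam + sigmaF d r lam 0 = sizeP d lam by simp [sigmaF]] at h
  rw [h]
  unfold BSRestricted
  rw [Set.mem_ofPred_eq, bal_iff hw hX]
  apply and_congr_right
  intro _
  constructor
  · intro h i h1 h2 k k1 k2
    exact (row_iff hw hX i k (by omega)).1 (h i (by omega) h2 k k1 k2)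
  · intro h i h1 h2 k k1 k2
    exact (row_iff hw hX i k (by omega)).2 (h i (by omega) h2 k k1 k2)

theorem restr_card {d r : ℕ} {w : Equiv.Perm ℤ} (hw : IsWdr d r w) {lam : ℕ → ℕ}
    (hlam : IsStrictPartition d lam) :
    Nat.card {X // Bal w (sizeP d (Zlam d r)) X ∧ RC X (sizeP d lam) (aPairs d r lam 0 d)} =
      Nat.card (BSRestricted d r lam) := by
  apply Nat.card_congr
  refine Equiv.ofBijective (fun X => ⟨X.1 ∘ phi d r, (restr_iff hw hlam X.2.1.2.1).2 X.2⟩) ⟨?_, ?_⟩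
  · rintro ⟨X, hX⟩ ⟨Y, hY⟩ h
    simp only [Subtype.mk.injEq] at h ⊢
    funext b
    by_cases hb : b ∈ PI w
    · obtain ⟨c, hc, rfl⟩ := (phi_bij hw).2.2 hb
      exact congrFun h c
    · rw [hX.1.2.1 b hb, hY.1.2.1 b hb]
  · rintro ⟨T, hT⟩
    classical
    let X : ℤ × ℤ → ℕ := fun b => if h : b ∈ PI w then T (phi_surj hw b h).choose else 0
    have hX : ∀ b, b ∉ PI w → X b = 0 := fun b hb => dif_neg hb
    have hXT : X ∘ phi d r = T := by
      funext c
      by_cases hc : phi d r c ∈ PI w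
      · have : X (phi d r c) = T (phi_surj hw _ hc).choose := dif_pos hc
        rw [Function.comp, this]
        exact congrArg T (phi_inj d r (phi_surj hw _ hc).choose_spec)
      · rw [Function.comp, hX _ hc]
        exact (hT.1.1.2 c (fun h => hc ((phi_mem hw c).2 h))).symm
    refine ⟨⟨X, (restr_iff hw hlam hX).1 (by rw [hXT]; exact hT)⟩, ?_⟩
    simp only [Subtype.mk.injEq]
    exact hXT

/-- `|BS(Z(d,r))|_λ| = |Red(w^λ)|`. -/
theorem bsRestricted_card_eq_red_wlam_card (d r : ℕ) (hd : 1 ≤ d)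
    (lam : ℕ → ℕ) (hlam : IsStrictPartition d lam)
    (hsub : ∀ i : ℕ, 1 ≤ i → i ≤ d → lam i ≤ Zlam d r i)
    (w : Equiv.Perm ℤ) (hw : IsWdr d r w) :
    Nat.card (BSRestricted d r lam) =
      Nat.card {L : List ℕ //
        IsReducedWord (d + r) (w * wordProd (aLamWord d r lam).reverse) L} := by


  have hmu := mu_bound (r := r) hlam
  rw [← restr_card hw hlam, ← aPairs_word d r lam hmu]
  symm
  have hlen := aPairs_length d r lam d 0
  rw [show sigmaF d r lam 0 = 0 by simp [sigmaF], zero_add, zero_add] at hlen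
  refine main_card (r := r) hw.1 _ (aPairs_good d r lam hmu d 0 (by omega)).1
    (aPairs_q d r lam 0 d (by omega)) ?_ _ _ (PI_card hw) ?_
  · intro p q h1 h2 h3 h4
    rw [mem_PI_w hw]
    push_cast at h4
    omega
  · rw [hlen, size_sigma hsub]

end BST
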